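/- For every inverse temperature β ∈ (0,∞) and every exponent q ∈ (0,2), with range exponent α = 2 + q/2, there exists a constant c_β > 0 (depending only on β and q) such that for every integer N ≥ 2, the variance of the height at the origin under the discrete q-SOS long-range chain satisfies c_β N/(ln N)^{2/q} ≤ Var^{q-SOS}_{N,β,2+q/2}[φ(0)]. -/

import Mathlib

noncomputable section

/-- Configurations of the long-range chain of length `N`: integer-valued height functions
on `ℤ` vanishing outside `{-N, …, N}`. -/
def ChainConfig (N : ℕ) : Type :=
  {φ : ℤ → ℤ // ∀ k : ℤ, (N : ℤ) < |k| → φ k = 0}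

/-- Energy `β ∑_{i ≠ j} |φ(i) − φ(j)|^q / |i − j|^α` of a configuration of the long-range
chain with potential exponent `q` and range exponent `α`. -/
def chainEnergy (β α q : ℝ) (φ : ℤ → ℤ) : ℝ :=
  β * ∑' p : ℤ × ℤ,
      if p.1 = p.2 then 0
      else |((φ p.1 - φ p.2 : ℤ) : ℝ)| ^ q / |((p.1 - p.2 : ℤ) : ℝ)| ^ α

/-- Boltzmann weight of a configuration. -/
def chainWeight (β α q : ℝ) (φ : ℤ → ℤ) : ℝ :=
  Real.exp (-chainEnergy β α q φ)

/-- Partition function of the long-range chain. -/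
def chainZ (N : ℕ) (β α q : ℝ) : ℝ :=
  ∑' φ : ChainConfig N, chainWeight β α q φ.val

/-- Mean of the height at the origin. -/
def chainMean (N : ℕ) (β α q : ℝ) : ℝ :=
  (∑' φ : ChainConfig N, ((φ.val 0 : ℤ) : ℝ) * chainWeight β α q φ.val) / chainZ N β α q

/-- Variance of the height at the origin under the long-range chain `μ_{N,β,α}`
(with potential exponent `q`; `q = 2` is the discrete Gaussian chain,
`q ∈ (0,2)` the `q`-SOS chain). -/
def chainVar (N : ℕ) (β α q : ℝ) : ℝ :=
  (∑' φ : ChainConfig N, ((φ.val 0 : ℤ) : ℝ) ^ 2 * chainWeight β α q φ.val) / chainZ N β α q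
    - chainMean N β α q ^ 2

end

open Filter Topology

/-- Positive semidefinite kernels. -/
def PSDK {A : Type*} (K : A → A → ℝ) : Prop :=
  ∀ (s : Finset A) (f : A → ℝ), 0 ≤ ∑ i ∈ s, ∑ j ∈ s, f i * f j * K i j

open Classical in
lemma PSDK_class {A B : Type*} (r : A → B) :
    PSDK (fun a b : A => if r a = r b then (1 : ℝ) else 0) := by
  intro s f
  have : ∑ i ∈ s, ∑ j ∈ s, f i * f j * (if r i = r j then (1 : ℝ) else 0)
      = ∑ c ∈ s.image r, (∑ i ∈ s, if r i = c then f i else 0) ^ 2 := by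
    have h1 : ∀ c, (∑ i ∈ s, if r i = c then f i else 0) ^ 2
        = ∑ i ∈ s, ∑ j ∈ s, (if r i = c then f i else 0) * (if r j = c then f j else 0) := by
      intro c; rw [sq, Finset.sum_mul_sum]
    simp_rw [h1]
    rw [Finset.sum_comm (s := s.image r)]
    refine Finset.sum_congr rfl fun i hi => ?_
    rw [Finset.sum_comm (s := s.image r)]
    refine Finset.sum_congr rfl fun j hj => ?_
    rw [Finset.sum_eq_single (r i)]
    · by_cases h : r i = r j
      · simp [h]
      · simp [h, Ne.symm h]
    · intro c _ hc
      simp [Ne.symm hc]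
    · intro h
      exact absurd (Finset.mem_image_of_mem r hi) h
  rw [this]
  exact Finset.sum_nonneg fun c _ => sq_nonneg _

lemma gauss_cos (t : ℝ) (ht : 0 ≤ t) (x : ℝ) :
    ∫ g, Real.cos (g * x) ∂(ProbabilityTheory.gaussianReal 0 (2 * t).toNNReal)
      = Real.exp (-(t * x ^ 2)) := by
  have h := ProbabilityTheory.charFun_gaussianReal (μ := 0) (v := (2 * t).toNNReal) x
  rw [MeasureTheory.charFun_apply_real] at h
  have h2 := congrArg Complex.re h
  rw [← RCLike.re_eq_complex_re, ← integral_re] at h2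
  · convert h2 using 1
    · congr 1
      ext g
      have : (x : ℂ) * g * Complex.I = ((g * x : ℝ) : ℂ) * Complex.I := by push_cast; ring
      rw [this]
      exact (Complex.exp_ofReal_mul_I_re _).symm
    · have : (x : ℂ) * (0:ℝ) * Complex.I - ((2 * t).toNNReal : ℝ) * x ^ 2 / 2
          = ((-(t * x ^ 2) : ℝ) : ℂ) := by
        rw [Real.coe_toNNReal _ (by positivity)]
        push_cast; ring
      simp only [RCLike.re_eq_complex_re]
      rw [this, Complex.exp_ofReal_re]
  · refine (MeasureTheory.integrable_const (1:ℝ)).mono' (by fun_prop) ?_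
    refine Filter.Eventually.of_forall fun g => ?_
    have : (x : ℂ) * g * Complex.I = ((g * x : ℝ) : ℂ) * Complex.I := by push_cast; ring
    rw [this, Complex.norm_exp_ofReal_mul_I]

lemma PSDK_mul_gauss {A : Type*} {K : A → A → ℝ} (hK : PSDK K) (t : ℝ) (ht : 0 ≤ t) (u : A → ℝ) :
    PSDK (fun a b => K a b * Real.exp (-(t * (u a - u b) ^ 2))) := by
  intro s f
  simp_rw [← gauss_cos t ht]
  set γ := ProbabilityTheory.gaussianReal 0 (2 * t).toNNReal
  have hint : ∀ x : ℝ, MeasureTheory.Integrable (fun g => Real.cos (g * x)) γ := by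
    intro x
    refine (MeasureTheory.integrable_const (1:ℝ)).mono' (by fun_prop) ?_
    exact Filter.Eventually.of_forall fun g => by
      rw [Real.norm_eq_abs]; exact Real.abs_cos_le_one _
  have h1 : ∑ i ∈ s, ∑ j ∈ s, f i * f j * (K i j * ∫ g, Real.cos (g * (u i - u j)) ∂γ)
      = ∫ g, ∑ i ∈ s, ∑ j ∈ s, f i * f j * (K i j * Real.cos (g * (u i - u j))) ∂γ := by
    rw [MeasureTheory.integral_finsetSum]
    · refine Finset.sum_congr rfl fun i _ => ?_
      rw [MeasureTheory.integral_finsetSum]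
      · refine Finset.sum_congr rfl fun j _ => ?_
        rw [MeasureTheory.integral_const_mul, MeasureTheory.integral_const_mul]
      · intro j _
        exact ((hint _).const_mul _).const_mul _
    · intro i _
      exact MeasureTheory.integrable_finsetSum _ fun j _ => ((hint _).const_mul _).const_mul _
  rw [h1]
  refine MeasureTheory.integral_nonneg fun g => ?_
  have e := add_nonneg (hK s (fun a => f a * Real.cos (g * u a)))
    (hK s (fun a => f a * Real.sin (g * u a)))
  rw [← Finset.sum_add_distrib] at e
  simp_rw [← Finset.sum_add_distrib] at e
  refine e.trans_eq ?_
  refine Finset.sum_congr rfl fun i _ => Finset.sum_congr rfl fun j _ => ?_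
  rw [mul_sub, Real.cos_sub]; ring

lemma PSDK_mul_gauss_sum {A J : Type*} {K : A → A → ℝ} (hK : PSDK K) (S : Finset J) (t : J → ℝ)
    (ht : ∀ j, 0 ≤ t j) (u : J → A → ℝ) :
    PSDK (fun a b => K a b * Real.exp (-(∑ j ∈ S, t j * (u j a - u j b) ^ 2))) := by
  classical
  induction S using Finset.induction_on with
  | empty => simpa using hK
  | insert j S hj ih =>
    have := PSDK_mul_gauss ih (t j) (ht j) (u j)
    convert this using 3 with a b
    rw [Finset.sum_insert hj, mul_assoc, ← Real.exp_add]
    congr 2; ring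

lemma tsum_PSDK_nonneg {A : Type*} {K : A → A → ℝ} (hK : PSDK K) (f : A → ℝ)
    (hs : Summable (fun p : A × A => f p.1 * f p.2 * K p.1 p.2)) :
    0 ≤ ∑' p : A × A, f p.1 * f p.2 * K p.1 p.2 := by
  classical
  have h := hs.hasSum
  have ht : Tendsto (fun s : Finset A => s ×ˢ s) atTop atTop := by
    refine tendsto_atTop_atTop_of_monotone (fun s t h => Finset.product_subset_product h h) ?_
    intro t
    refine ⟨t.image Prod.fst ∪ t.image Prod.snd, ?_⟩
    intro p hp
    simp only [Finset.mem_product, Finset.mem_union, Finset.mem_image]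
    exact ⟨Or.inl ⟨p, hp, rfl⟩, Or.inr ⟨p, hp, rfl⟩⟩
  have h2 := Tendsto.comp h ht
  refine ge_of_tendsto h2 (Filter.Eventually.of_forall fun s => ?_)
  simp only [Function.comp]
  rw [Finset.sum_product]
  exact hK s f

lemma hasSum_mul_real {A B : Type*} {f : A → ℝ} {g : B → ℝ} {a b : ℝ} (hf : HasSum f a)
    (hg : HasSum g b) : HasSum (fun p : A × B => f p.1 * g p.2) (a * b) := by
  have h1 : Summable (fun x => ‖f x‖) := hf.summable.norm
  have h2 : Summable (fun x => ‖g x‖) := hg.summable.norm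
  exact hf.mul hg (summable_mul_of_summable_norm h1 h2)

lemma hasSum_pi_fin : ∀ (n : ℕ) (f : Fin n → ℤ → ℝ), (∀ i, Summable (f i)) →
    HasSum (fun X : Fin n → ℤ => ∏ i, f i (X i)) (∏ i, ∑' x, f i x) := by
  intro n
  induction n with
  | zero =>
    intro f _
    simp only [Finset.univ_eq_empty, Finset.prod_empty]
    exact hasSum_unique (fun _ : Fin 0 → ℤ => (1:ℝ))
  | succ n ih =>
    intro f hf
    have h1 := ih (fun i => f i.succ) (fun i => hf _)
    have h2 := hasSum_mul_real (hf 0).hasSum h1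
    rw [Fin.prod_univ_succ]
    rw [← (Fin.consEquiv (fun _ : Fin (n+1) => ℤ)).hasSum_iff]
    convert h2 using 2 with p
    simp [Fin.prod_univ_succ, Fin.consEquiv]

lemma hasSum_pi {I : Type*} [Fintype I] (f : I → ℤ → ℝ) (hf : ∀ i, Summable (f i)) :
    HasSum (fun X : I → ℤ => ∏ i, f i (X i)) (∏ i, ∑' x, f i x) := by
  let e := Fintype.equivFin I
  have h := hasSum_pi_fin _ (fun j => f (e.symm j)) (fun j => hf _)
  rw [← (Equiv.arrowCongr e (Equiv.refl ℤ)).hasSum_iff] at h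
  convert h using 1
  · ext X
    simp only [Function.comp, Equiv.arrowCongr_apply, Equiv.coe_refl, id]
    rw [← e.symm.prod_comp]
  · rw [← e.symm.prod_comp]

open Classical in
theorem ginibre {I K : Type*} (l : (K → ℤ) →+ (I → ℤ)) (hl : Function.Injective l)
    (x0 : (I → ℤ) →+ ℤ) (Q : (I → ℤ) → ℝ)
    (par : ∀ a b, Q (a + b) + Q (a - b) = 2 * Q a + 2 * Q b) (P : (K → ℤ) → ℝ)
    (hP : ∀ k : (I → ℤ) → (I → ℤ) → ℝ, PSDK k → ∀ r : (I → ℤ) → (K → ℤ),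
      PSDK (fun a b => k a b * Real.exp (-P (r a - r b))))
    (s0 : Summable fun φ => Real.exp (-Q φ))
    (s1 : Summable fun φ => (x0 φ : ℝ) ^ 2 * Real.exp (-Q φ))
    (s0' : Summable fun X => Real.exp (-(Q (l X) + P X)))
    (s1' : Summable fun X => (x0 (l X) : ℝ) ^ 2 * Real.exp (-(Q (l X) + P X))) :
    (∑' φ, Real.exp (-Q φ)) * ∑' X, (x0 (l X) : ℝ) ^ 2 * Real.exp (-(Q (l X) + P X))
      ≤ (∑' φ, (x0 φ : ℝ) ^ 2 * Real.exp (-Q φ)) * ∑' X, Real.exp (-(Q (l X) + P X)) := by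
  have hG := (hasSum_mul_real s1.hasSum s0'.hasSum).sub (hasSum_mul_real s0.hasSum s1'.hasSum)
  let H : AddSubgroup (I → ℤ) := (l + l).range
  let cl : (I → ℤ) → (I → ℤ) ⧸ H := QuotientAddGroup.mk
  have hmem : ∀ a, ∃ X, l X + l X = a - (cl a).out := by
    intro a
    have : cl ((cl a).out) = cl a := Quotient.out_eq _
    have h2 := QuotientAddGroup.eq.1 this
    obtain ⟨X, hX⟩ := h2
    exact ⟨X, by simpa [sub_eq_neg_add] using hX⟩
  choose r hr using hmem
  have hdiff : ∀ a b, cl a = cl b → l (r a - r b) + l (r a - r b) = a - b := by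
    intro a b hab
    have h1 := hr a
    have h2 := hr b
    rw [hab] at h1
    rw [map_sub]
    have : l (r a) - l (r b) + (l (r a) - l (r b)) = (l (r a) + l (r a)) - (l (r b) + l (r b)) := by
      abel
    rw [this, h1, h2]; abel
  let k : (I → ℤ) → (I → ℤ) → ℝ := fun a b =>
    (if cl a = cl b then (1:ℝ) else 0) * Real.exp (-P (r a - r b))
  have hk : PSDK k := by
    have h := hP _ (PSDK_class cl) r
    convert h
  let F : (I → ℤ) → ℝ := fun a => (x0 a : ℝ) * Real.exp (-(Q a / 2))
  let j : (I → ℤ) × (K → ℤ) → (I → ℤ) × (I → ℤ) := fun p => (p.1 + l p.2, p.1 - l p.2)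
  have two_inj : ∀ a b : I → ℤ, a + a = b + b → a = b := by
    intro a b h
    ext i
    have := congrFun h i
    simp only [Pi.add_apply] at this
    omega
  have hj : Function.Injective j := by
    rintro ⟨a, X⟩ ⟨b, Y⟩ h
    simp only [j, Prod.mk.injEq] at h
    obtain ⟨h1, h2⟩ := h
    have e1 : a = b := by
      apply two_inj
      have : a + a = (a + l X) + (a - l X) := by abel
      rw [this, h1, h2]; abel
    subst e1
    have e2 : l X = l Y := by simpa using h1
    rw [hl e2]
  have hsupp : ∀ p, p ∉ Set.range j → F p.1 * F p.2 * k p.1 p.2 = 0 := by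
    rintro ⟨a, b⟩ hp
    have : cl a ≠ cl b := by
      intro hab
      apply hp
      have h := hdiff a b hab
      refine ⟨(b + l (r a - r b), r a - r b), ?_⟩
      simp only [j, Prod.mk.injEq]
      constructor
      · rw [add_assoc, h]; abel
      · abel
    simp [k, this]
  have hcomp : (fun p : (I → ℤ) × (I → ℤ) => F p.1 * F p.2 * k p.1 p.2) ∘ j = fun p =>
      (x0 p.1 : ℝ) ^ 2 * Real.exp (-Q p.1) * Real.exp (-(Q (l p.2) + P p.2))
      - Real.exp (-Q p.1) * ((x0 (l p.2) : ℝ) ^ 2 * Real.exp (-(Q (l p.2) + P p.2))) := by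
    ext ⟨a, X⟩
    have hcl : cl (a + l X) = cl (a - l X) := by
      apply QuotientAddGroup.eq.2
      refine ⟨-X, ?_⟩
      simp only [AddMonoidHom.add_apply, map_neg]
      abel
    have hd := hdiff _ _ hcl
    have hX : r (a + l X) - r (a - l X) = X := by
      apply hl
      apply two_inj
      rw [hd]; abel
    simp only [Function.comp, j, k, F, hcl, if_true, hX, map_add, map_sub, Int.cast_add,
      Int.cast_sub]
    have hQ := par a (l X)
    have e : Real.exp (-Q a) * Real.exp (-(Q (l X) + P X))
        = Real.exp (-(Q (a + l X) / 2)) * Real.exp (-(Q (a - l X) / 2)) * Real.exp (-P X) := by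
      rw [← Real.exp_add, ← Real.exp_add, ← Real.exp_add]
      congr 1; linarith
    linear_combination (-((x0 a : ℝ) ^ 2 - (x0 (l X) : ℝ) ^ 2)) * e
  have hH := (hj.hasSum_iff (f := fun p : (I → ℤ) × (I → ℤ) => F p.1 * F p.2 * k p.1 p.2)
    hsupp).1 (hcomp ▸ hG)
  have := tsum_PSDK_nonneg hk F hH.summable
  rw [hH.tsum_eq] at this
  linarith

lemma summable_int_sq_exp {c : ℝ} (hc : 0 < c) {p : ℝ} (hp : 0 < p) :
    Summable (fun x : ℤ => (1 + (x:ℝ) ^ 2) * Real.exp (-(c * |(x:ℝ)| ^ p))) := by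
  have h1 : Tendsto (fun y : ℝ => y ^ (4 / p) * Real.exp (-c * y)) atTop (𝓝 0) :=
    tendsto_rpow_mul_exp_neg_mul_atTop_nhds_zero _ _ hc
  have h2 : Tendsto (fun x : ℝ => x ^ 4 * Real.exp (-(c * x ^ p))) atTop (𝓝 0) := by
    refine (h1.comp (tendsto_rpow_atTop hp)).congr' ?_
    filter_upwards [eventually_ge_atTop 0] with x hx
    simp only [Function.comp]
    rw [← Real.rpow_mul hx, mul_div_cancel₀ _ hp.ne', neg_mul]
    norm_cast
  have h3 : ∀ᶠ n : ℕ in atTop, (n:ℝ) ^ 4 * Real.exp (-(c * (n:ℝ) ^ p)) ≤ 1 :=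
    ((h2.comp tendsto_natCast_atTop_atTop).eventually (ge_mem_nhds one_pos)).mono fun n h => h
  have hnat : Summable (fun n : ℕ => (1 + (n:ℝ) ^ 2) * Real.exp (-(c * (n:ℝ) ^ p))) := by
    refine Summable.of_norm_bounded_eventually_nat (g := fun n : ℕ => 2 * (1 / (n:ℝ) ^ 2))
      ((Real.summable_one_div_nat_pow.2 one_lt_two).mul_left 2) ?_
    filter_upwards [h3, eventually_ge_atTop 1] with n hn h1
    have hn1 : (1:ℝ) ≤ n := by exact_mod_cast h1
    rw [Real.norm_of_nonneg (by positivity)]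
    have hE := Real.exp_pos (-(c * (n:ℝ) ^ p))
    rw [mul_one_div, le_div_iff₀ (by positivity)]
    have : (1 + (n:ℝ) ^ 2) * (n:ℝ) ^ 2 ≤ 2 * (n:ℝ) ^ 4 := by
      have hz : (1:ℝ) ≤ (n:ℝ) ^ 2 := one_le_pow₀ hn1
      have e4 : (n:ℝ) ^ 4 = (n:ℝ) ^ 2 * (n:ℝ) ^ 2 := by ring
      rw [e4]; nlinarith
    nlinarith
  refine Summable.of_nat_of_neg ?_ ?_
  · simpa using hnat
  · simpa using hnat

lemma gauss_one_dim {κ : ℝ} (hκ : 0 < κ) :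
    2 / 3 * Real.exp (-κ) * ∑' x : ℤ, Real.exp (-(κ * (x:ℝ) ^ 2))
      ≤ ∑' x : ℤ, (x:ℝ) ^ 2 * Real.exp (-(κ * (x:ℝ) ^ 2)) := by
  have hs := summable_int_sq_exp hκ (p := 2) two_pos
  have hs' : Summable (fun x : ℤ => (1 + (x:ℝ) ^ 2) * Real.exp (-(κ * (x:ℝ) ^ 2))) := by
    refine hs.congr fun x => ?_
    norm_num
  have s0 : Summable (fun x : ℤ => Real.exp (-(κ * (x:ℝ) ^ 2))) := by
    refine Summable.of_nonneg_of_le (fun x => (Real.exp_pos _).le) (fun x => ?_) hs'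
    nlinarith [Real.exp_pos (-(κ * (x:ℝ) ^ 2)), sq_nonneg (x:ℝ)]
  have s1 : Summable (fun x : ℤ => (x:ℝ) ^ 2 * Real.exp (-(κ * (x:ℝ) ^ 2))) := by
    refine Summable.of_nonneg_of_le (fun x => by positivity) (fun x => ?_) hs'
    nlinarith [Real.exp_pos (-(κ * (x:ℝ) ^ 2)), sq_nonneg (x:ℝ)]
  have hle : ∑' x : ℤ, Real.exp (-(κ * (x:ℝ) ^ 2))
      ≤ ∑' x : ℤ, ((x:ℝ) ^ 2 * Real.exp (-(κ * (x:ℝ) ^ 2)) + if x = 0 then (1:ℝ) else 0) := by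
    refine s0.tsum_le_tsum (fun x => ?_) (s1.add (hasSum_ite_eq 0 1).summable)
    by_cases hx : x = 0
    · simp [hx]
    · have h1 : (1:ℝ) ≤ (x:ℝ) ^ 2 := by
        have : (1:ℤ) ≤ x ^ 2 := by
          have : 0 < x ^ 2 := by positivity
          omega
        exact_mod_cast this
      simp only [hx, if_false, add_zero]
      nlinarith [Real.exp_pos (-(κ * (x:ℝ) ^ 2))]
  rw [s1.tsum_add (hasSum_ite_eq 0 1).summable, (hasSum_ite_eq (0:ℤ) (1:ℝ)).tsum_eq] at hle
  have hlow : 2 * Real.exp (-κ) ≤ ∑' x : ℤ, (x:ℝ) ^ 2 * Real.exp (-(κ * (x:ℝ) ^ 2)) := by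
    have := s1.sum_le_tsum ({1, -1} : Finset ℤ) (fun x _ => by positivity)
    rw [Finset.sum_pair (by norm_num)] at this
    norm_num at this
    linarith
  set T := ∑' x : ℤ, (x:ℝ) ^ 2 * Real.exp (-(κ * (x:ℝ) ^ 2))
  have he : Real.exp (-κ) ≤ 1 := Real.exp_le_one_iff.2 (by linarith)
  have hp := Real.exp_pos (-κ)
  nlinarith

lemma summable_pi_gauss {K : Type*} [Fintype K] (κ : K → ℝ) (hκ : ∀ k, 0 < κ k) :
    Summable (fun X : K → ℤ => (∏ k, (1 + (X k : ℝ) ^ 2)) * Real.exp (-(∑ k, κ k * (X k : ℝ) ^ 2))) := by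
  have h := (hasSum_pi (fun k (x : ℤ) => (1 + (x:ℝ) ^ 2) * Real.exp (-(κ k * (x:ℝ) ^ 2)))
    (fun k => by
      refine (summable_int_sq_exp (hκ k) (p := 2) two_pos).congr fun x => ?_
      norm_num)).summable
  refine h.congr fun X => ?_
  rw [Finset.prod_mul_distrib, ← Real.exp_sum, Finset.sum_neg_distrib]

lemma one_le_prod_sq {K : Type*} [Fintype K] (X : K → ℤ) : 1 ≤ ∏ k, (1 + (X k : ℝ) ^ 2) := by
  have := Finset.prod_le_prod (s := Finset.univ) (f := fun _ => (1:ℝ))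
    (g := fun x => (1 + (X x : ℝ) ^ 2))
    (fun _ _ => zero_le_one) (fun x _ => by nlinarith [sq_nonneg (X x : ℝ)])
  simpa using this

lemma sq_le_prod_sq {K : Type*} [Fintype K] (X : K → ℤ) (k : K) :
    (X k : ℝ) ^ 2 ≤ ∏ k, (1 + (X k : ℝ) ^ 2) := by
  classical
  rw [← Finset.mul_prod_erase _ _ (Finset.mem_univ k)]
  have : (1:ℝ) ≤ ∏ x ∈ Finset.univ.erase k, (1 + (X x : ℝ) ^ 2) := by
    have := Finset.prod_le_prod (s := Finset.univ.erase k) (f := fun _ => (1:ℝ)) (g := fun x => (1 + (X x : ℝ) ^ 2))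
      (fun _ _ => zero_le_one) (fun x _ => by nlinarith [sq_nonneg (X x : ℝ)])
    simpa using this
  nlinarith [sq_nonneg (X k : ℝ)]

lemma summable_pi_gauss0 {K : Type*} [Fintype K] (κ : K → ℝ) (hκ : ∀ k, 0 < κ k) :
    Summable (fun X : K → ℤ => Real.exp (-(∑ k, κ k * (X k : ℝ) ^ 2))) := by
  refine Summable.of_nonneg_of_le (fun x => (Real.exp_pos _).le) (fun X => ?_) (summable_pi_gauss κ hκ)
  nlinarith [one_le_prod_sq X, Real.exp_pos (-(∑ k, κ k * (X k : ℝ) ^ 2))]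

lemma summable_pi_gauss2 {K : Type*} [Fintype K] (κ : K → ℝ) (hκ : ∀ k, 0 < κ k) (k l : K) :
    Summable (fun X : K → ℤ => (X k : ℝ) * X l * Real.exp (-(∑ k, κ k * (X k : ℝ) ^ 2))) := by
  refine Summable.of_norm_bounded (summable_pi_gauss κ hκ) (fun X => ?_)
  rw [norm_mul, Real.norm_of_nonneg (Real.exp_pos _).le]
  refine mul_le_mul_of_nonneg_right ?_ (Real.exp_pos _).le
  have h1 := sq_le_prod_sq X k
  have h2 := sq_le_prod_sq X l
  rw [Real.norm_eq_abs, abs_le]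
  constructor <;> nlinarith [sq_nonneg ((X k : ℝ) - X l), sq_nonneg ((X k : ℝ) + X l)]

lemma gauss_diag {K : Type*} [Fintype K] (κ : K → ℝ) (hκ : ∀ k, 0 < κ k) (k : K) :
    2 / 3 * Real.exp (-κ k) * ∑' X : K → ℤ, Real.exp (-(∑ k, κ k * (X k : ℝ) ^ 2))
      ≤ ∑' X : K → ℤ, (X k : ℝ) * X k * Real.exp (-(∑ k, κ k * (X k : ℝ) ^ 2)) := by
  classical
  have hs : ∀ k, Summable (fun x : ℤ => (1 + (x:ℝ) ^ 2) * Real.exp (-(κ k * (x:ℝ) ^ 2))) := fun k => by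
      refine (summable_int_sq_exp (hκ k) (p := 2) two_pos).congr fun x => ?_
      norm_num
  have s0 : ∀ k, Summable (fun x : ℤ => Real.exp (-(κ k * (x:ℝ) ^ 2))) := fun k => by
    refine Summable.of_nonneg_of_le (fun x => (Real.exp_pos _).le) (fun x => ?_) (hs k)
    nlinarith [Real.exp_pos (-(κ k * (x:ℝ) ^ 2)), sq_nonneg (x:ℝ)]
  have s1 : ∀ k, Summable (fun x : ℤ => (x:ℝ) ^ 2 * Real.exp (-(κ k * (x:ℝ) ^ 2))) := fun k => by
    refine Summable.of_nonneg_of_le (fun x => by positivity) (fun x => ?_) (hs k)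
    nlinarith [Real.exp_pos (-(κ k * (x:ℝ) ^ 2)), sq_nonneg (x:ℝ)]
  have h0 := hasSum_pi (fun k (x : ℤ) => Real.exp (-(κ k * (x:ℝ) ^ 2))) s0
  have h1 := hasSum_pi (fun j (x : ℤ) => (if j = k then (x:ℝ) ^ 2 else 1) * Real.exp (-(κ j * (x:ℝ) ^ 2)))
    (fun j => by
      by_cases h : j = k
      · simpa [h] using s1 k
      · simpa [h] using s0 j)
  have e0 : (fun X : K → ℤ => Real.exp (-(∑ k, κ k * (X k : ℝ) ^ 2)))
      = fun X : K → ℤ => ∏ k, Real.exp (-(κ k * (X k:ℝ) ^ 2)) := by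
    ext X; rw [← Real.exp_sum, Finset.sum_neg_distrib]
  have e1 : (fun X : K → ℤ => (X k : ℝ) * X k * Real.exp (-(∑ k, κ k * (X k : ℝ) ^ 2)))
      = fun X : K → ℤ => ∏ j, ((if j = k then (X j:ℝ) ^ 2 else 1) * Real.exp (-(κ j * (X j:ℝ) ^ 2))) := by
    ext X; rw [Finset.prod_mul_distrib, ← Real.exp_sum, Finset.sum_neg_distrib]
    simp [sq]
  rw [e0, e1, h0.tsum_eq, h1.tsum_eq, ← Finset.mul_prod_erase _ _ (Finset.mem_univ k),
    ← Finset.mul_prod_erase _ _ (Finset.mem_univ k), ← mul_assoc]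
  have e2 : ∏ x ∈ Finset.univ.erase k, ∑' y : ℤ, (if x = k then (y:ℝ) ^ 2 else 1) * Real.exp (-(κ x * (y:ℝ) ^ 2))
      = ∏ x ∈ Finset.univ.erase k, ∑' y : ℤ, Real.exp (-(κ x * (y:ℝ) ^ 2)) := by
    refine Finset.prod_congr rfl fun x hx => ?_
    simp [Finset.ne_of_mem_erase hx]
  rw [e2]
  refine mul_le_mul_of_nonneg_right ?_ (Finset.prod_nonneg fun x _ => tsum_nonneg fun y => (Real.exp_pos _).le)
  simpa using gauss_one_dim (hκ k)

lemma gauss_offdiag {K : Type*} [Fintype K] (κ : K → ℝ) (k l : K) (hkl : k ≠ l) :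
    ∑' X : K → ℤ, (X k : ℝ) * X l * Real.exp (-(∑ k, κ k * (X k : ℝ) ^ 2)) = 0 := by
  classical
  let e : (K → ℤ) ≃ (K → ℤ) := Equiv.piCongrRight (fun j => if j = k then Equiv.neg ℤ else Equiv.refl ℤ)
  have h := e.tsum_eq (fun X : K → ℤ => (X k : ℝ) * X l * Real.exp (-(∑ k, κ k * (X k : ℝ) ^ 2)))
  have : ∀ X : K → ℤ, ((e X k : ℤ) : ℝ) * (e X l : ℤ) * Real.exp (-(∑ k, κ k * ((e X k : ℤ) : ℝ) ^ 2))
      = - ((X k : ℝ) * X l * Real.exp (-(∑ k, κ k * (X k : ℝ) ^ 2))) := by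
    intro X
    have hk : e X k = - X k := by simp [e]
    have hl : e X l = X l := by simp [e, hkl.symm]
    have hsq : ∀ j, ((e X j : ℤ) : ℝ) ^ 2 = (X j : ℝ) ^ 2 := by
      intro j
      by_cases hj : j = k
      · subst hj; rw [hk]; simp
      · have : e X j = X j := by simp [e, hj]
        rw [this]
    simp only [hsq, hk, hl]
    push_cast; ring
  simp_rw [this] at h
  rw [tsum_neg] at h
  linarith

theorem gauss_nn {K : Type*} [Fintype K] (κ : K → ℝ) (hκ : ∀ k, 0 < κ k) :
    (2 / 3 * ∑ k, Real.exp (-κ k)) * ∑' X : K → ℤ, Real.exp (-(∑ k, κ k * (X k : ℝ) ^ 2))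
      ≤ ∑' X : K → ℤ, (∑ k, (X k : ℝ)) ^ 2 * Real.exp (-(∑ k, κ k * (X k : ℝ) ^ 2)) := by
  classical
  have e : ∀ X : K → ℤ, (∑ k, (X k : ℝ)) ^ 2 * Real.exp (-(∑ k, κ k * (X k : ℝ) ^ 2))
      = ∑ k, ∑ l, (X k : ℝ) * X l * Real.exp (-(∑ k, κ k * (X k : ℝ) ^ 2)) := by
    intro X
    rw [sq, Finset.sum_mul_sum, Finset.sum_mul]
    simp_rw [Finset.sum_mul]
  simp_rw [e]
  rw [Summable.tsum_finsetSum (fun k _ => summable_sum fun l _ => summable_pi_gauss2 κ hκ k l)]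
  rw [Finset.mul_sum, Finset.sum_mul]
  refine Finset.sum_le_sum fun k _ => ?_
  rw [Summable.tsum_finsetSum (fun l _ => summable_pi_gauss2 κ hκ k l)]
  rw [Finset.sum_eq_single k]
  · exact gauss_diag κ hκ k
  · intro l _ hl
    exact gauss_offdiag κ k l hl.symm
  · simp

/-- weight of a coarse increment in an edge -/
noncomputable def rhoC {K : Type*} [DecidableEq K] (e : Finset K) (k : K) : ℝ :=
  if k ∈ e then (e.card : ℝ) else 0

lemma rhoC_nonneg {K : Type*} [DecidableEq K] (e : Finset K) (k : K) : 0 ≤ rhoC e k := by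
  unfold rhoC; split_ifs <;> positivity

/-- `exp(-P)` is a positive definite function. -/
def PKer (I : Type*) {K : Type*} (P : (K → ℤ) → ℝ) : Prop :=
  ∀ k : (I → ℤ) → (I → ℤ) → ℝ, PSDK k → ∀ r : (I → ℤ) → (K → ℤ),
      PSDK (fun a b => k a b * Real.exp (-P (r a - r b)))

lemma PKer_add {I K : Type*} {P P' : (K → ℤ) → ℝ} (h : PKer I P) (h' : PKer I P') :
    PKer I (fun X => P X + P' X) := by
  intro k hk r
  have := h' _ (h k hk r) r
  convert this using 3 with a b
  rw [mul_assoc, ← Real.exp_add]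
  congr 2; ring

lemma sq_identity {K : Type*} (e : Finset K) (X : K → ℝ) :
    (e.card : ℝ) * ∑ k ∈ e, X k ^ 2 - (∑ k ∈ e, X k) ^ 2
      = ∑ p ∈ e ×ˢ e, 1 / 2 * (X p.1 - X p.2) ^ 2 := by
  rw [Finset.sum_product]
  have : ∀ k j, 1 / 2 * (X k - X j) ^ 2 = 1 / 2 * X k ^ 2 + 1 / 2 * X j ^ 2 - X k * X j := by
    intros; ring
  simp_rw [this, Finset.sum_sub_distrib, Finset.sum_add_distrib, Finset.sum_const, ← Finset.mul_sum,
    ← Finset.sum_mul]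
  simp only [nsmul_eq_mul]
  rw [← Finset.mul_sum, ← Finset.mul_sum]
  ring

lemma PKer_atom (I : Type*) {K : Type*} [Fintype K] [DecidableEq K] (l : (K → ℤ) →+ (I → ℤ))
    (x : (I → ℤ) →+ ℤ) (e : Finset K) (h : ∀ X, (x (l X)) ^ 2 = (∑ k ∈ e, X k) ^ 2) (s : ℝ)
    (hs : 0 ≤ s) :
    PKer I (fun X => s * (∑ k, rhoC e k * (X k : ℝ) ^ 2 - (x (l X) : ℝ) ^ 2)) := by
  intro k hk r
  have := PSDK_mul_gauss_sum hk (e ×ˢ e) (fun _ => s * (1 / 2)) (fun _ => by positivity)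
    (fun p a => ((r a p.1 : ℤ) : ℝ) - (r a p.2 : ℤ))
  convert this using 5 with a b
  have e1 : ((x (l (r a - r b)) : ℤ) : ℝ) ^ 2 = (∑ k ∈ e, (((r a - r b) k : ℤ) : ℝ)) ^ 2 := by
    exact_mod_cast h (r a - r b)
  have e2 : ∑ k, rhoC e k * (((r a - r b) k : ℤ) : ℝ) ^ 2
      = (e.card : ℝ) * ∑ k ∈ e, (((r a - r b) k : ℤ) : ℝ) ^ 2 := by
    rw [Finset.mul_sum]
    simp only [rhoC, ite_mul, zero_mul]
    rw [Finset.sum_ite_mem, Finset.univ_inter]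
  beta_reduce
  rw [e1, e2, sq_identity e (fun k => (((r a - r b) k : ℤ) : ℝ)), Finset.mul_sum]
  congr 1
  refine Finset.sum_congr rfl fun p _ => ?_
  simp only [Pi.sub_apply]
  push_cast
  ring

/-- Admissible pairs (quadratic form, dominating diagonal form). -/
structure GoodQ {I K : Type*} [Fintype I] [Fintype K] (δ : ℝ) (l : (K → ℤ) →+ (I → ℤ))
    (Q : (I → ℤ) → ℝ) (κ : K → ℝ) : Prop where
  par : ∀ a b, Q (a + b) + Q (a - b) = 2 * Q a + 2 * Q b
  low : ∀ a, ∑ i, δ * (a i : ℝ) ^ 2 ≤ Q a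
  pos : ∀ k, 0 < κ k
  ker : PKer I (fun X => ∑ k, κ k * (X k : ℝ) ^ 2 - Q (l X))

section
variable {I K : Type*} [Fintype I] [Fintype K] [DecidableEq K] {δ : ℝ} {l : (K → ℤ) →+ (I → ℤ)}

lemma GoodQ.step {Q : (I → ℤ) → ℝ} {κ : K → ℝ} (h : GoodQ δ l Q κ)
    (x : (I → ℤ) →+ ℤ) (e : Finset K) (hx : ∀ X, (x (l X)) ^ 2 = (∑ k ∈ e, X k) ^ 2) (s : ℝ)
    (hs : 0 ≤ s) :
    GoodQ δ l (fun a => Q a + s * (x a : ℝ) ^ 2) (fun k => κ k + s * rhoC e k) where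
  par a b := by
    have := h.par a b
    simp only [map_add, map_sub, Int.cast_add, Int.cast_sub]
    linarith
  low a := (h.low a).trans (by nlinarith [mul_nonneg hs (sq_nonneg (x a : ℝ))])
  pos k := add_pos_of_pos_of_nonneg (h.pos k) (mul_nonneg hs (rhoC_nonneg e k))
  ker := by
    have := PKer_add h.ker (PKer_atom I l x e hx s hs)
    convert this using 2 with X
    simp_rw [add_mul, Finset.sum_add_distrib, mul_sub, Finset.mul_sum, mul_assoc]
    ring

lemma GoodQ.summable0 {Q : (I → ℤ) → ℝ} {κ : K → ℝ} (h : GoodQ δ l Q κ) (hδ : 0 < δ) :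
    Summable (fun φ => Real.exp (-Q φ)) :=
  Summable.of_nonneg_of_le (fun x => (Real.exp_pos _).le)
    (fun φ => Real.exp_le_exp.2 (neg_le_neg (h.low φ))) (summable_pi_gauss0 (fun _ : I => δ) fun _ => hδ)

lemma GoodQ.summable1 {Q : (I → ℤ) → ℝ} {κ : K → ℝ} (h : GoodQ δ l Q κ) (hδ : 0 < δ) (i0 : I) :
    Summable (fun φ : I → ℤ => (φ i0 : ℝ) ^ 2 * Real.exp (-Q φ)) := by
  refine Summable.of_nonneg_of_le (fun x => by positivity)
    (fun φ => ?_) (summable_pi_gauss2 (fun _ : I => δ) (fun _ => hδ) i0 i0)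
  rw [sq]
  exact mul_le_mul_of_nonneg_left (Real.exp_le_exp.2 (neg_le_neg (h.low φ))) (mul_self_nonneg _)

lemma ratio_helper {Z Z' N N' R : ℝ} (hZ : 0 ≤ Z) (hZ' : 0 < Z') (n : R * Z' ≤ N')
    (g : Z * N' ≤ N * Z') : R * Z ≤ N := by
  have := mul_le_mul_of_nonneg_left n hZ
  have h3 : (R * Z) * Z' ≤ N * Z' := by
    refine le_trans (le_of_eq ?_) (this.trans g)
    ring
  exact le_of_mul_le_mul_right h3 hZ'

theorem GoodQ.ineq {Q : (I → ℤ) → ℝ} {κ : K → ℝ} (h : GoodQ δ l Q κ) (hδ : 0 < δ) (i0 : I)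
    (hl : Function.Injective l) (h0 : ∀ X, l X i0 = ∑ k, X k) :
    (2 / 3 * ∑ k, Real.exp (-κ k)) * ∑' φ : I → ℤ, Real.exp (-Q φ)
      ≤ ∑' φ : I → ℤ, (φ i0 : ℝ) ^ 2 * Real.exp (-Q φ) := by
  have e : ∀ X : K → ℤ, Q (l X) + (∑ k, κ k * (X k : ℝ) ^ 2 - Q (l X)) = ∑ k, κ k * (X k : ℝ) ^ 2 := by
    intro X; ring
  have hs0 := summable_pi_gauss0 κ h.pos
  have hs1 : Summable fun X : K → ℤ => (∑ k, (X k : ℝ)) ^ 2 * Real.exp (-(∑ k, κ k * (X k : ℝ) ^ 2)) := by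
    have := summable_sum (s := Finset.univ) fun k _ =>
      summable_sum (s := Finset.univ) fun l _ => summable_pi_gauss2 κ h.pos k l
    refine this.congr fun X => ?_
    rw [sq, Finset.sum_mul_sum, Finset.sum_mul]
    simp_rw [Finset.sum_mul]
  have hc : ∀ X : K → ℤ, ((l X i0 : ℤ) : ℝ) = ∑ k, (X k : ℝ) := by
    intro X; rw [h0, Int.cast_sum]
  have g := ginibre l hl (Pi.evalAddMonoidHom (fun _ : I => ℤ) i0) Q h.par
    (fun X => ∑ k, κ k * (X k : ℝ) ^ 2 - Q (l X)) h.ker (h.summable0 hδ)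
    (h.summable1 hδ i0) (by simpa only [e] using hs0)
    (by simpa only [e, Pi.evalAddMonoidHom_apply, hc] using hs1)
  simp only [e, Pi.evalAddMonoidHom_apply, hc] at g
  have n := gauss_nn κ h.pos
  exact ratio_helper (tsum_nonneg fun _ => (Real.exp_pos _).le)
    (hs0.tsum_pos (fun _ => (Real.exp_pos _).le) 0 (Real.exp_pos _)) n g

theorem atoms_ineq (hδ : 0 < δ) (i0 : I)
    (hl : Function.Injective l) (h0 : ∀ X, l X i0 = ∑ k, X k)
    {J : Type*} (p s : J → ℝ) (hp0 : ∀ j, 0 ≤ p j) (hp1 : ∀ j, p j ≤ 1) (hs : ∀ j, 0 ≤ s j)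
    (x : J → (I → ℤ) →+ ℤ) (e : J → Finset K)
    (hx : ∀ j X, (x j (l X)) ^ 2 = (∑ k ∈ e j, X k) ^ 2) (A : Finset J) :
    ∀ (Q : (I → ℤ) → ℝ) (κ : K → ℝ), GoodQ δ l Q κ →
    (2 / 3 * ∑ k, Real.exp (-κ k) * ∏ j ∈ A, (1 - p j + p j * Real.exp (-(s j * rhoC (e j) k))))
      * ∑' φ : I → ℤ, Real.exp (-Q φ) * ∏ j ∈ A, (1 - p j + p j * Real.exp (-(s j * (x j φ : ℝ) ^ 2)))
      ≤ ∑' φ : I → ℤ, (φ i0 : ℝ) ^ 2 *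
        (Real.exp (-Q φ) * ∏ j ∈ A, (1 - p j + p j * Real.exp (-(s j * (x j φ : ℝ) ^ 2)))) := by
  classical
  induction A using Finset.induction_on with
  | empty =>
    intro Q κ h
    simpa using h.ineq hδ i0 hl h0
  | insert j A hj ih =>
    intro Q κ h
    have h' := h.step (x j) (e j) (hx j) (s j) (hs j)
    have ih1 := ih Q κ h
    have ih2 := ih _ _ h'
    have hw : ∀ j φ, 0 ≤ 1 - p j + p j * Real.exp (-(s j * (x j φ : ℝ) ^ 2)) := fun j φ =>
      add_nonneg (by linarith [hp1 j]) (mul_nonneg (hp0 j) (Real.exp_pos _).le)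
    have hw1 : ∀ j φ, 1 - p j + p j * Real.exp (-(s j * (x j φ : ℝ) ^ 2)) ≤ 1 := fun j φ => by
      have : Real.exp (-(s j * (x j φ : ℝ) ^ 2)) ≤ 1 :=
        Real.exp_le_one_iff.2 (neg_nonpos.2 (mul_nonneg (hs j) (sq_nonneg _)))
      nlinarith [hp0 j]
    have hr : ∀ j k, 0 ≤ 1 - p j + p j * Real.exp (-(s j * rhoC (e j) k)) := fun j φ =>
      add_nonneg (by linarith [hp1 j]) (mul_nonneg (hp0 j) (Real.exp_pos _).le)
    have hprod : ∀ φ, 0 ≤ ∏ j ∈ A, (1 - p j + p j * Real.exp (-(s j * (x j φ : ℝ) ^ 2))) :=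
      fun φ => Finset.prod_nonneg fun j _ => hw j φ
    have hprod1 : ∀ φ, ∏ j ∈ A, (1 - p j + p j * Real.exp (-(s j * (x j φ : ℝ) ^ 2))) ≤ 1 :=
      fun φ => Finset.prod_le_one (fun j _ => hw j φ) (fun j _ => hw1 j φ)
    have sum0 : ∀ (Q : (I → ℤ) → ℝ) (κ : K → ℝ), GoodQ δ l Q κ → Summable fun φ : I → ℤ =>
        Real.exp (-Q φ) * ∏ j ∈ A, (1 - p j + p j * Real.exp (-(s j * (x j φ : ℝ) ^ 2))) := by
      intro Q κ h
      refine Summable.of_nonneg_of_le (fun φ => mul_nonneg (Real.exp_pos _).le (hprod φ)) (fun φ => ?_)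
        (h.summable0 hδ)
      exact mul_le_of_le_one_right (Real.exp_pos _).le (hprod1 φ)
    have sum1 : ∀ (Q : (I → ℤ) → ℝ) (κ : K → ℝ), GoodQ δ l Q κ → Summable fun φ : I → ℤ =>
        (φ i0 : ℝ) ^ 2 *
        (Real.exp (-Q φ) * ∏ j ∈ A, (1 - p j + p j * Real.exp (-(s j * (x j φ : ℝ) ^ 2)))) := by
      intro Q κ h
      refine Summable.of_nonneg_of_le (fun φ => mul_nonneg (sq_nonneg _) (mul_nonneg (Real.exp_pos _).le (hprod φ)))
        (fun φ => ?_) (h.summable1 hδ i0)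
      exact mul_le_mul_of_nonneg_left (mul_le_of_le_one_right (Real.exp_pos _).le (hprod1 φ)) (sq_nonneg _)
    -- abbreviations
    have eW : ∀ φ : I → ℤ, Real.exp (-Q φ) *
        ∏ j ∈ insert j A, (1 - p j + p j * Real.exp (-(s j * (x j φ : ℝ) ^ 2)))
        = (1 - p j) * (Real.exp (-Q φ) * ∏ j ∈ A, (1 - p j + p j * Real.exp (-(s j * (x j φ : ℝ) ^ 2))))
        + p j * (Real.exp (-(Q φ + s j * (x j φ : ℝ) ^ 2)) *
          ∏ j ∈ A, (1 - p j + p j * Real.exp (-(s j * (x j φ : ℝ) ^ 2)))) := by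
      intro φ
      rw [Finset.prod_insert hj, neg_add, Real.exp_add]; ring
    have eN : ∀ φ : I → ℤ, (φ i0 : ℝ) ^ 2 * (Real.exp (-Q φ) *
        ∏ j ∈ insert j A, (1 - p j + p j * Real.exp (-(s j * (x j φ : ℝ) ^ 2))))
        = (1 - p j) * ((φ i0 : ℝ) ^ 2 * (Real.exp (-Q φ) *
          ∏ j ∈ A, (1 - p j + p j * Real.exp (-(s j * (x j φ : ℝ) ^ 2)))))
        + p j * ((φ i0 : ℝ) ^ 2 * (Real.exp (-(Q φ + s j * (x j φ : ℝ) ^ 2)) *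
          ∏ j ∈ A, (1 - p j + p j * Real.exp (-(s j * (x j φ : ℝ) ^ 2))))) := by
      intro φ
      rw [eW]; ring
    have er : 2 / 3 * ∑ k, Real.exp (-κ k) *
          ∏ j ∈ insert j A, (1 - p j + p j * Real.exp (-(s j * rhoC (e j) k)))
        = (1 - p j) * (2 / 3 * ∑ k, Real.exp (-κ k) *
            ∏ j ∈ A, (1 - p j + p j * Real.exp (-(s j * rhoC (e j) k))))
          + p j * (2 / 3 * ∑ k, Real.exp (-(κ k + s j * rhoC (e j) k)) *
            ∏ j ∈ A, (1 - p j + p j * Real.exp (-(s j * rhoC (e j) k)))) := by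
      simp only [Finset.mul_sum]
      rw [← Finset.sum_add_distrib]
      refine Finset.sum_congr rfl fun k _ => ?_
      rw [Finset.prod_insert hj, neg_add, Real.exp_add]; ring
    simp_rw [eN, eW]
    rw [er, ((sum0 _ _ h).mul_left _).tsum_add ((sum0 _ _ h').mul_left _),
      ((sum1 _ _ h).mul_left _).tsum_add ((sum1 _ _ h').mul_left _),
      tsum_mul_left, tsum_mul_left, tsum_mul_left, tsum_mul_left]
    have hZ : (∑' φ : I → ℤ, Real.exp (-(Q φ + s j * (x j φ : ℝ) ^ 2)) *
          ∏ j ∈ A, (1 - p j + p j * Real.exp (-(s j * (x j φ : ℝ) ^ 2))))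
        ≤ ∑' φ : I → ℤ, Real.exp (-Q φ) *
          ∏ j ∈ A, (1 - p j + p j * Real.exp (-(s j * (x j φ : ℝ) ^ 2))) := by
      refine (sum0 _ _ h').tsum_le_tsum (fun φ => ?_) (sum0 _ _ h)
      refine mul_le_mul_of_nonneg_right (Real.exp_le_exp.2 ?_) (hprod φ)
      nlinarith [mul_nonneg (hs j) (sq_nonneg (x j φ : ℝ))]
    have hR : (2 / 3 * ∑ k, Real.exp (-(κ k + s j * rhoC (e j) k)) *
            ∏ j ∈ A, (1 - p j + p j * Real.exp (-(s j * rhoC (e j) k))))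
        ≤ 2 / 3 * ∑ k, Real.exp (-κ k) *
            ∏ j ∈ A, (1 - p j + p j * Real.exp (-(s j * rhoC (e j) k))) := by
      refine mul_le_mul_of_nonneg_left (Finset.sum_le_sum fun k _ => ?_) (by norm_num)
      refine mul_le_mul_of_nonneg_right (Real.exp_le_exp.2 ?_) (Finset.prod_nonneg fun j _ => hr j k)
      nlinarith [mul_nonneg (hs j) (rhoC_nonneg (e j) k)]
    have q0 := hp0 j
    have q1 := hp1 j
    generalize p j = P at *
    revert ih1 ih2 hZ hR
    generalize (∑' φ : I → ℤ, Real.exp (-(Q φ + s j * (x j φ : ℝ) ^ 2)) *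
          ∏ j ∈ A, (1 - p j + p j * Real.exp (-(s j * (x j φ : ℝ) ^ 2)))) = Z2
    generalize (∑' φ : I → ℤ, Real.exp (-Q φ) *
          ∏ j ∈ A, (1 - p j + p j * Real.exp (-(s j * (x j φ : ℝ) ^ 2)))) = Z1
    generalize (2 / 3 * ∑ k, Real.exp (-(κ k + s j * rhoC (e j) k)) *
            ∏ j ∈ A, (1 - p j + p j * Real.exp (-(s j * rhoC (e j) k)))) = R2
    generalize (2 / 3 * ∑ k, Real.exp (-κ k) *
            ∏ j ∈ A, (1 - p j + p j * Real.exp (-(s j * rhoC (e j) k)))) = R1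
    intro ih1 ih2 hZ hR
    have a1 := mul_le_mul_of_nonneg_left ih1 (sub_nonneg.2 q1)
    have a2 := mul_le_mul_of_nonneg_left ih2 q0
    refine le_trans ?_ (add_le_add a1 a2)
    nlinarith [mul_nonneg (mul_nonneg q0 (sub_nonneg.2 q1)) (mul_nonneg (sub_nonneg.2 hZ) (sub_nonneg.2 hR))]

/-- The base Gaussian. -/
lemma GoodQ.base (hδ : 0 < δ) (i0 : I) (e : I → Finset K) (he : ∀ i X, l X i = ∑ k ∈ e i, X k)
    (he0 : e i0 = Finset.univ) :
    GoodQ δ l (fun a => ∑ i, δ * (a i : ℝ) ^ 2) (fun k => ∑ i, δ * rhoC (e i) k) where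
  par a b := by
    rw [← Finset.sum_add_distrib, Finset.mul_sum, Finset.mul_sum, ← Finset.sum_add_distrib]
    refine Finset.sum_congr rfl fun i _ => ?_
    simp only [Pi.add_apply, Pi.sub_apply]
    push_cast; ring
  low a := le_rfl
  pos k := by
    refine Finset.sum_pos' (fun i _ => mul_nonneg hδ.le (rhoC_nonneg _ _)) ⟨i0, Finset.mem_univ _, ?_⟩
    refine mul_pos hδ ?_
    simp only [rhoC, he0, Finset.mem_univ, if_true]
    exact_mod_cast Finset.card_pos.2 ⟨k, Finset.mem_univ k⟩
  ker := by
    classical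
    have : ∀ S : Finset I, PKer I (fun X : K → ℤ => ∑ i ∈ S, δ * (∑ k, rhoC (e i) k * (X k : ℝ) ^ 2 - (l X i : ℝ) ^ 2)) := by
      intro S
      induction S using Finset.induction_on with
      | empty => intro k hk r; simpa using hk
      | insert i S hi ih =>
        simp_rw [Finset.sum_insert hi]
        exact PKer_add (PKer_atom I l (Pi.evalAddMonoidHom _ i) (e i)
          (fun X => by simp only [Pi.evalAddMonoidHom_apply, he]) δ hδ.le) ih
    convert this Finset.univ using 2 with X
    simp_rw [mul_sub, Finset.sum_sub_distrib, Finset.sum_mul, Finset.mul_sum]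
    rw [Finset.sum_comm]
    simp_rw [mul_assoc]
end

lemma riemann_tendsto {g : ℝ → ℝ} (hg : AntitoneOn g (Set.Ioi 0)) (h0 : ∀ u, 0 ≤ g u)
    (h1 : ∀ u, g u ≤ 1) (hi : MeasureTheory.IntegrableOn g (Set.Ioi 0)) :
    Tendsto (fun n : ℕ => (1 / (n : ℝ)) * ∑ j ∈ Finset.range (n ^ 2), g (((j : ℝ) + 1) / n)) atTop
      (𝓝 (∫ u in Set.Ioi 0, g u)) := by
  have hint : ∀ a b : ℝ, 0 ≤ a → 0 ≤ b → IntervalIntegrable g MeasureTheory.volume a b := by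
    intro a b ha hb
    rw [intervalIntegrable_iff]
    exact hi.mono_set (by
      intro x hx
      rw [Set.uIoc, Set.mem_Ioc] at hx
      exact lt_of_le_of_lt (le_min ha hb) hx.1)
  have hle : ∀ a b : ℝ, 0 ≤ a → a ≤ b → ∫ x in a..b, g x ≤ ∫ u in Set.Ioi 0, g u := by
    intro a b ha hab
    rw [intervalIntegral.integral_of_le hab]
    apply MeasureTheory.setIntegral_mono_set hi
    · exact Filter.Eventually.of_forall h0
    · apply LE.le.eventuallyLE
      intro x hx
      exact lt_of_le_of_lt ha hx.1
  have hsc : ∀ (n : ℕ) (a b : ℝ), 0 < n → ∫ x in a..b, g (x / n) = n * ∫ x in a / n..b / n, g x := by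
    intro n a b hn
    have : (n : ℝ) ≠ 0 := by positivity
    rw [intervalIntegral.integral_comp_div _ this]; rfl
  have hanti : ∀ (n : ℕ) (b : ℝ), 0 < n → AntitoneOn (fun x : ℝ => g (x / n)) (Set.Icc 1 b) := by
    intro n b hn x hx y hy hxy
    have : (0 : ℝ) < n := by positivity
    apply hg
    · exact div_pos (by linarith [hx.1]) this
    · exact div_pos (by linarith [hy.1]) this
    · gcongr
  refine tendsto_of_tendsto_of_tendsto_of_le_of_le'
    (g := fun n : ℕ => (∫ x in (0 : ℝ)..((n : ℝ) + 1 / n), g x) - 1 / n)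
    (h := fun n : ℕ => 1 / (n : ℝ) + ∫ u in Set.Ioi 0, g u) ?_ ?_ ?_ ?_
  · have t1 : Tendsto (fun n : ℕ => (n : ℝ) + 1 / n) atTop atTop :=
      tendsto_atTop_mono (fun n => by simp; ) tendsto_natCast_atTop_atTop
    have := (MeasureTheory.intervalIntegral_tendsto_integral_Ioi 0 hi t1).sub
      tendsto_one_div_atTop_nhds_zero_nat
    simpa using this
  · simpa using (tendsto_one_div_atTop_nhds_zero_nat (𝕜 := ℝ)).add_const (∫ u in Set.Ioi 0, g u)
  · filter_upwards [eventually_gt_atTop 0] with n hn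
    have hn' : (0 : ℝ) < n := by positivity
    have h := AntitoneOn.integral_le_sum (hanti n (1 + (n ^ 2 : ℕ)) hn)
    rw [hsc n _ _ hn] at h
    have e1 : (1 + ((n ^ 2 : ℕ) : ℝ)) / n = n + 1 / n := by
      push_cast; field_simp; ring
    rw [e1] at h
    have e2 := intervalIntegral.integral_add_adjacent_intervals (hint 0 (1 / n) le_rfl (by positivity))
      (hint (1 / n) (n + 1 / n) (by positivity) (by positivity))
    have e3 : ∫ x in (0 : ℝ)..1 / n, g x ≤ 1 / n := by
      have := intervalIntegral.integral_mono_on (a := 0) (b := 1 / (n : ℝ)) (by positivity) 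
        (hint 0 (1 / n) le_rfl (by positivity)) (intervalIntegrable_const (c := (1 : ℝ))) (fun x _ => h1 x)
      simpa using this
    have e4 : ∫ x in (1 : ℝ) / n..n + 1 / n, g x
        ≤ (1 / (n : ℝ)) * ∑ j ∈ Finset.range (n ^ 2), g (((j : ℝ) + 1) / n) := by
      rw [div_mul_eq_mul_div, one_mul, le_div_iff₀ hn', mul_comm]
      simpa [add_comm] using h
    linarith
  · filter_upwards [eventually_gt_atTop 0] with n hn
    have hn' : (0 : ℝ) < n := by positivity
    have hnn : 0 < n ^ 2 := by positivity
    obtain ⟨M, hM⟩ : ∃ M, n ^ 2 = M + 1 := ⟨n ^ 2 - 1, by omega⟩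
    have h := AntitoneOn.sum_le_integral (hanti n (1 + (M : ℕ)) hn)
    rw [hsc n _ _ hn] at h
    have h' := hle (1 / n) ((1 + (M : ℝ)) / n) (by positivity) (by gcongr; simp)
    rw [hM, Finset.sum_range_succ', mul_add, add_comm]
    have e1 : (1 / (n : ℝ)) * g ((((0 : ℕ) : ℝ) + 1) / n) ≤ 1 / n := by
      have := h1 ((((0 : ℕ) : ℝ) + 1) / n)
      have h3 : 0 ≤ 1 / (n : ℝ) := by positivity
      nlinarith
    have e2 : (1 / (n : ℝ)) * ∑ j ∈ Finset.range M, g ((((j + 1 : ℕ) : ℝ) + 1) / n)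
        ≤ ∫ x in (1 : ℝ) / n..(1 + (M : ℝ)) / n, g x := by
      rw [div_mul_eq_mul_div, one_mul, div_le_iff₀ hn', mul_comm]
      simpa [add_comm] using h
    linarith

/-- the product of `1 - a/n` is asymptotically the exponential. -/
lemma prod_tendsto (a : ℕ → ℕ → ℝ) (h0 : ∀ n j, 0 ≤ a n j) (h1 : ∀ n j, a n j ≤ 1) (L : ℝ)
    (h : Tendsto (fun n : ℕ => (1 / (n : ℝ)) * ∑ j ∈ Finset.range (n ^ 2), a n j) atTop (𝓝 L)) :
    Tendsto (fun n : ℕ => ∏ j ∈ Finset.range (n ^ 2), (1 - (1 / (n : ℝ)) * a n j)) atTop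
      (𝓝 (Real.exp (-L))) := by
  refine tendsto_of_tendsto_of_tendsto_of_le_of_le'
    (g := fun n : ℕ => Real.exp (-((1 / (1 - 1 / (n : ℝ))) *
      ((1 / (n : ℝ)) * ∑ j ∈ Finset.range (n ^ 2), a n j))))
    (h := fun n : ℕ => Real.exp (-((1 / (n : ℝ)) * ∑ j ∈ Finset.range (n ^ 2), a n j))) ?_ ?_ ?_ ?_
  · apply (Real.continuous_exp.tendsto _).comp
    have t : Tendsto (fun n : ℕ => 1 / (1 - 1 / (n : ℝ))) atTop (𝓝 (1 / (1 - 0))) :=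
      tendsto_const_nhds.div ((tendsto_one_div_atTop_nhds_zero_nat (𝕜 := ℝ)).const_sub 1)
        (by norm_num)
    simpa using (t.mul h).neg
  · exact (Real.continuous_exp.tendsto _).comp h.neg
  · filter_upwards [eventually_gt_atTop 1] with n hn
    rw [Finset.mul_sum, Finset.mul_sum, ← Finset.sum_neg_distrib, Real.exp_sum]
    apply Finset.prod_le_prod
    · intros; positivity
    intro j _
    have hn' : (1 : ℝ) < n := by exact_mod_cast hn
    have hx0 : 0 ≤ 1 / (n : ℝ) * a n j := mul_nonneg (by positivity) (h0 n j)
    have hx1 : 1 / (n : ℝ) * a n j ≤ 1 / n := by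
      have h3 : 0 ≤ 1 / (n : ℝ) := by positivity
      nlinarith [h1 n j]
    have hn2 : 1 / (n : ℝ) < 1 := by rw [div_lt_one (by positivity)]; exact hn'
    generalize 1 / (n : ℝ) * a n j = x at *
    generalize 1 / (n : ℝ) = t at *
    have h5 : Real.exp (1 / (1 - t) * x) ≥ 1 + x / (1 - x) := by
      have := Real.add_one_le_exp (1 / (1 - t) * x)
      have : x / (1 - x) ≤ 1 / (1 - t) * x := by
        rw [div_mul_eq_mul_div, one_mul]
        gcongr
      linarith
    have h6 : 1 + x / (1 - x) = (1 - x)⁻¹ := by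
      have : 1 - x ≠ 0 := by linarith
      field_simp; ring
    rw [Real.exp_neg]
    rw [h6] at h5
    have := inv_anti₀ (by have : 0 < 1 - x := by linarith
                          positivity) h5
    simpa using this
  · filter_upwards [eventually_gt_atTop 1] with n hn
    rw [Finset.mul_sum, ← Finset.sum_neg_distrib, Real.exp_sum]
    have hn' : (1 : ℝ) < n := by exact_mod_cast hn
    apply Finset.prod_le_prod
    · intro j _
      have hn2 : 1 / (n : ℝ) < 1 := by rw [div_lt_one (by positivity)]; exact hn'
      have h3 : 0 ≤ 1 / (n : ℝ) := by positivity
      nlinarith [h1 n j]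
    intro j _
    have := Real.add_one_le_exp (-(1 / (n : ℝ) * a n j))
    linarith

lemma gTheta_integrable {r : ℝ} (hr : 1 < r) (y : ℝ) (hy : 0 ≤ y) :
    MeasureTheory.IntegrableOn (fun u : ℝ => 1 - Real.exp (-(y * u ^ (-r)))) (Set.Ioi 0) := by
  have hm : Measurable (fun u : ℝ => 1 - Real.exp (-(y * u ^ (-r)))) := by fun_prop
  rw [← Set.Ioc_union_Ioi_eq_Ioi (zero_le_one (α := ℝ)), MeasureTheory.integrableOn_union]
  constructor
  · refine MeasureTheory.Measure.integrableOn_of_bounded (M := 1) (by simp) hm.aestronglyMeasurable ?_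
    refine (MeasureTheory.ae_restrict_iff' measurableSet_Ioc).2 (Eventually.of_forall fun u hu => ?_)
    have hu0 : 0 ≤ y * u ^ (-r) := mul_nonneg hy (Real.rpow_nonneg hu.1.le _)
    have h1 : Real.exp (-(y * u ^ (-r))) ≤ 1 := Real.exp_le_one_iff.2 (by linarith)
    have h2 := Real.exp_pos (-(y * u ^ (-r)))
    rw [Real.norm_eq_abs, abs_of_nonneg (by linarith)]
    linarith
  · refine MeasureTheory.Integrable.mono'
      (((integrableOn_Ioi_rpow_of_lt (a := -r) (by linarith) one_pos)).const_mul y)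
      hm.aestronglyMeasurable ?_
    refine (MeasureTheory.ae_restrict_iff' measurableSet_Ioi).2 (Eventually.of_forall fun u hu => ?_)
    have hu0 : 0 ≤ y * u ^ (-r) := mul_nonneg hy (Real.rpow_nonneg (by linarith [Set.mem_Ioi.1 hu]) _)
    have h1 : Real.exp (-(y * u ^ (-r))) ≤ 1 := Real.exp_le_one_iff.2 (by linarith)
    have h2 := Real.add_one_le_exp (-(y * u ^ (-r)))
    rw [Real.norm_eq_abs, abs_of_nonneg (by linarith)]
    linarith

lemma gTheta_scale {θ : ℝ} (h0 : 0 < θ) (y : ℝ) (hy : 0 ≤ y) :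
    ∫ u in Set.Ioi (0 : ℝ), (1 - Real.exp (-(y * u ^ (-(1 / θ)))))
      = y ^ θ * ∫ u in Set.Ioi (0 : ℝ), (1 - Real.exp (-(1 * u ^ (-(1 / θ))))) := by
  rcases hy.eq_or_lt with rfl | hy
  · simp [Real.zero_rpow h0.ne']
  have hp : 0 < y ^ θ := by positivity
  have := MeasureTheory.integral_comp_mul_left_Ioi
    (fun u : ℝ => (1 - Real.exp (-(y * u ^ (-(1 / θ)))))) 0 hp
  rw [mul_zero] at this
  suffices key : (∫ u in Set.Ioi (0 : ℝ), (1 - Real.exp (-(1 * u ^ (-(1 / θ)))))) =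
      ∫ x in Set.Ioi (0 : ℝ), (1 - Real.exp (-(y * (y ^ θ * x) ^ (-(1 / θ))))) by
    rw [key, this, smul_eq_mul, ← mul_assoc, mul_inv_cancel₀ hp.ne', one_mul]
  apply MeasureTheory.setIntegral_congr_fun measurableSet_Ioi
  intro u hu
  have hu' : (0 : ℝ) < u := hu
  simp only
  rw [Real.mul_rpow hp.le hu'.le, ← Real.rpow_mul hy.le]
  rw [show θ * -(1 / θ) = -1 by field_simp, Real.rpow_neg_one, ← mul_assoc, mul_inv_cancel₀ hy.ne']

lemma approx_lemma {θ : ℝ} (h0 : 0 < θ) (h1 : θ < 1) (b : ℝ) (hb : 0 ≤ b) :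
    ∃ s : ℕ → ℕ → ℝ, (∀ n j, 0 ≤ s n j) ∧ ∀ y : ℝ, 0 ≤ y →
      Tendsto (fun n : ℕ => ∏ j ∈ Finset.range (n ^ 2),
        (1 - 1 / (n : ℝ) + 1 / (n : ℝ) * Real.exp (-(s n j * y)))) atTop
        (𝓝 (Real.exp (-(b * y ^ θ)))) := by
  have hr : 1 < 1 / θ := by rw [lt_div_iff₀ h0]; linarith
  set C := ∫ u in Set.Ioi (0 : ℝ), (1 - Real.exp (-(1 * u ^ (-(1 / θ))))) with hC
  have hCpos : 0 < C := by
    rw [hC, MeasureTheory.setIntegral_pos_iff_support_of_nonneg_ae]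
    · have : Set.Ioi (0:ℝ) ⊆ (Function.support fun u : ℝ => 1 - Real.exp (-(1 * u ^ (-(1 / θ)))))
            ∩ Set.Ioi (0:ℝ) := by
        intro u hu
        refine ⟨?_, hu⟩
        have hu' : (0 : ℝ) < u := hu
        have : Real.exp (-(1 * u ^ (-(1 / θ)))) < 1 := by
          rw [Real.exp_lt_one_iff]
          have : 0 < u ^ (-(1 / θ)) := by positivity
          linarith
        simp only [Function.mem_support]
        linarith
      refine lt_of_lt_of_le ?_ (MeasureTheory.measure_mono this)
      simp
    · refine (MeasureTheory.ae_restrict_iff' measurableSet_Ioi).2 (Eventually.of_forall fun u hu => ?_)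
      have hu' : (0 : ℝ) < u := hu
      have : Real.exp (-(1 * u ^ (-(1 / θ)))) ≤ 1 := by
        rw [Real.exp_le_one_iff]
        have : 0 < u ^ (-(1 / θ)) := by positivity
        linarith
      simp only [Pi.zero_apply]
      linarith
    · exact gTheta_integrable hr 1 zero_le_one
  set D := (b / C) ^ (1 / θ) with hD
  have hD0 : 0 ≤ D := by positivity
  refine ⟨fun n j => D * (((j : ℝ) + 1) / n) ^ (-(1 / θ)), fun n j => by positivity, ?_⟩
  intro y hy
  -- truncated function
  let g : ℝ → ℝ := fun u => 1 - Real.exp (-((D * y) * |u| ^ (-(1 / θ))))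
  have hg0 : ∀ u, 0 ≤ g u := by
    intro u
    have : Real.exp (-((D * y) * |u| ^ (-(1 / θ)))) ≤ 1 := by
      rw [Real.exp_le_one_iff]
      have : 0 ≤ (D * y) * |u| ^ (-(1 / θ)) := by positivity
      linarith
    simp only [g]; linarith
  have hg1 : ∀ u, g u ≤ 1 := by
    intro u
    have := Real.exp_pos (-((D * y) * |u| ^ (-(1 / θ))))
    simp only [g]; linarith
  have hanti : AntitoneOn g (Set.Ioi 0) := by
    intro u hu v hv huv
    have hu' : (0 : ℝ) < u := hu
    have hv' : (0 : ℝ) < v := hv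
    simp only [g]
    rw [abs_of_pos hu', abs_of_pos hv']
    have : v ^ (-(1 / θ)) ≤ u ^ (-(1 / θ)) :=
      Real.rpow_le_rpow_of_nonpos hu' huv (by linarith)
    gcongr
  have hgi : MeasureTheory.IntegrableOn g (Set.Ioi 0) := by
    refine (gTheta_integrable hr (D * y) (by positivity)).congr_fun ?_ measurableSet_Ioi
    intro u hu
    have hu' : (0 : ℝ) < u := hu
    simp only [g, abs_of_pos hu']
  have hI : ∫ u in Set.Ioi 0, g u = b * y ^ θ := by
    have : ∫ u in Set.Ioi 0, g u = ∫ u in Set.Ioi (0 : ℝ), (1 - Real.exp (-((D * y) * u ^ (-(1 / θ))))) := by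
      refine MeasureTheory.setIntegral_congr_fun measurableSet_Ioi ?_
      intro u hu
      have hu' : (0 : ℝ) < u := hu
      simp only [g, abs_of_pos hu']
    rw [this, gTheta_scale h0 _ (by positivity), Real.mul_rpow hD0 hy, hD, ← Real.rpow_mul (by positivity)]
    rw [one_div, inv_mul_cancel₀ h0.ne', Real.rpow_one]
    simp only [one_div] at hC
    rw [← hC]; field_simp
  have R := riemann_tendsto hanti hg0 hg1 hgi
  rw [hI] at R
  have := prod_tendsto (fun n j => g (((j : ℝ) + 1) / n)) (fun _ _ => hg0 _) (fun _ _ => hg1 _) _ R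
  refine this.congr fun n => Finset.prod_congr rfl fun j _ => ?_
  simp only [g]
  rw [abs_of_nonneg (by positivity : (0 : ℝ) ≤ ((j : ℝ) + 1) / n)]
  rw [show D * y * (((j : ℝ) + 1) / n) ^ (-(1 / θ)) = D * (((j : ℝ) + 1) / n) ^ (-(1 / θ)) * y by ring]
  ring

lemma limit_lemma {Ω : Type*} (f : Ω → ℝ) (W : ℕ → Ω → ℝ) (V G : Ω → ℝ) (r : ℕ → ℝ) (r' : ℝ)
    (hW : ∀ φ, Tendsto (fun n => W n φ) atTop (𝓝 (V φ)))
    (hG : ∀ᶠ n in atTop, ∀ φ, 0 ≤ W n φ ∧ W n φ ≤ G φ)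
    (hs : Summable G) (hs2 : Summable fun φ => f φ ^ 2 * G φ)
    (hr : Tendsto r atTop (𝓝 r'))
    (h : ∀ᶠ n in atTop, r n * ∑' φ, W n φ ≤ ∑' φ, f φ ^ 2 * W n φ) :
    r' * ∑' φ, V φ ≤ ∑' φ, f φ ^ 2 * V φ := by
  have t1 : Tendsto (fun n => ∑' φ, W n φ) atTop (𝓝 (∑' φ, V φ)) := by
    refine tendsto_tsum_of_dominated_convergence hs hW ?_
    filter_upwards [hG] with n hn φ
    rw [Real.norm_eq_abs, abs_of_nonneg (hn φ).1]
    exact (hn φ).2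
  have t2 : Tendsto (fun n => ∑' φ, f φ ^ 2 * W n φ) atTop (𝓝 (∑' φ, f φ ^ 2 * V φ)) := by
    refine tendsto_tsum_of_dominated_convergence hs2 (fun φ => (hW φ).const_mul _) ?_
    filter_upwards [hG] with n hn φ
    rw [Real.norm_eq_abs, abs_of_nonneg (mul_nonneg (sq_nonneg _) (hn φ).1)]
    exact mul_le_mul_of_nonneg_left (hn φ).2 (sq_nonneg _)
  exact le_of_tendsto_of_tendsto (hr.mul t1) t2 h

section
variable {I K P : Type*} [Fintype I] [Fintype K] [DecidableEq K]

lemma first_limit {δ θ : ℝ} (hδ : 0 < δ) (h0 : 0 < θ) (h1 : θ < 1) (l : (K → ℤ) →+ (I → ℤ))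
    (hl : Function.Injective l) (i0 : I)
    (e0 : I → Finset K) (he : ∀ i X, l X i = ∑ k ∈ e0 i, X k) (he0 : e0 i0 = Finset.univ)
    (b : P → ℝ) (hb : ∀ p, 0 ≤ b p) (x : P → (I → ℤ) →+ ℤ) (e : P → Finset K)
    (hx : ∀ p X, (x p (l X)) ^ 2 = (∑ k ∈ e p, X k) ^ 2) (F : Finset P) :
    (2 / 3 * ∑ k, Real.exp (-∑ i, δ * rhoC (e0 i) k) *
        ∏ p ∈ F, Real.exp (-(b p * (rhoC (e p) k) ^ θ))) *
      ∑' φ : I → ℤ, Real.exp (-∑ i, δ * (φ i : ℝ) ^ 2) *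
        ∏ p ∈ F, Real.exp (-(b p * ((x p φ : ℝ) ^ 2) ^ θ))
    ≤ ∑' φ : I → ℤ, (φ i0 : ℝ) ^ 2 * (Real.exp (-∑ i, δ * (φ i : ℝ) ^ 2) *
        ∏ p ∈ F, Real.exp (-(b p * ((x p φ : ℝ) ^ 2) ^ θ))) := by
  choose s hs0 hs using fun p => approx_lemma h0 h1 (b p) (hb p)
  have hgood := GoodQ.base hδ i0 e0 he he0
  refine limit_lemma (fun φ : I → ℤ => (φ i0 : ℝ))
    (fun n φ => Real.exp (-∑ i, δ * (φ i : ℝ) ^ 2) * ∏ p ∈ F, ∏ j ∈ Finset.range (n ^ 2),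
      (1 - 1 / (n : ℝ) + 1 / (n : ℝ) * Real.exp (-(s p n j * (x p φ : ℝ) ^ 2)))) _
    (fun φ => Real.exp (-∑ i, δ * (φ i : ℝ) ^ 2))
    (fun n => 2 / 3 * ∑ k, Real.exp (-∑ i, δ * rhoC (e0 i) k) * ∏ p ∈ F, ∏ j ∈ Finset.range (n ^ 2),
      (1 - 1 / (n : ℝ) + 1 / (n : ℝ) * Real.exp (-(s p n j * rhoC (e p) k)))) _
    ?_ ?_ ?_ ?_ ?_ ?_
  · intro φ
    exact (tendsto_finsetProd _ fun p _ => hs p _ (sq_nonneg _)).const_mul _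
  · refine Eventually.of_forall fun n φ => ?_
    have hn : 1 / (n : ℝ) ≤ 1 := by
      rcases Nat.eq_zero_or_pos n with rfl | hn
      · simp
      · rw [div_le_one (by positivity)]; exact_mod_cast hn
    have hn0 : 0 ≤ 1 / (n : ℝ) := by positivity
    have a0 : ∀ p j, 0 ≤ 1 - 1 / (n : ℝ) + 1 / (n : ℝ) * Real.exp (-(s p n j * (x p φ : ℝ) ^ 2)) := by
      intro p j
      have := mul_nonneg hn0 (Real.exp_pos (-(s p n j * (x p φ : ℝ) ^ 2))).le
      linarith
    have a1 : ∀ p j, 1 - 1 / (n : ℝ) + 1 / (n : ℝ) * Real.exp (-(s p n j * (x p φ : ℝ) ^ 2)) ≤ 1 := by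
      intro p j
      have : Real.exp (-(s p n j * (x p φ : ℝ) ^ 2)) ≤ 1 := by
        rw [Real.exp_le_one_iff]
        have := mul_nonneg (hs0 p n j) (sq_nonneg (x p φ : ℝ))
        linarith
      nlinarith
    constructor
    · exact mul_nonneg (Real.exp_pos _).le
        (Finset.prod_nonneg fun p _ => Finset.prod_nonneg fun j _ => a0 p j)
    · apply mul_le_of_le_one_right (Real.exp_pos _).le
      exact Finset.prod_le_one (fun p _ => Finset.prod_nonneg fun j _ => a0 p j)
        fun p _ => Finset.prod_le_one (fun j _ => a0 p j) fun j _ => a1 p j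
  · exact summable_pi_gauss0 (fun _ => δ) (fun _ => hδ)
  · have := summable_pi_gauss2 (fun _ : I => δ) (fun _ => hδ) i0 i0
    simpa only [sq] using this
  · refine Tendsto.const_mul _ (tendsto_finsetSum _ fun k _ => Tendsto.const_mul _ ?_)
    exact tendsto_finsetProd _ fun p _ => hs p _ (rhoC_nonneg _ _)
  · refine Eventually.of_forall fun n => ?_
    have hn : 1 / (n : ℝ) ≤ 1 := by
      rcases Nat.eq_zero_or_pos n with rfl | hn
      · simp
      · rw [div_le_one (by positivity)]; exact_mod_cast hn
    have := atoms_ineq hδ i0 hl (fun X => by rw [he, he0]) (fun _ : P × ℕ => 1 / (n : ℝ))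
      (fun j => s j.1 n j.2) (fun _ => by positivity) (fun _ => hn) (fun j => hs0 _ _ _)
      (fun j => x j.1) (fun j => e j.1) (fun j X => hx j.1 X) (F ×ˢ Finset.range (n ^ 2)) _ _ hgood
    simpa only [Finset.prod_product] using this
end

/-- sites of the chain -/
abbrev Site (N : ℕ) : Type := {i : ℤ // i ∈ Finset.Icc (-(N : ℤ)) N}

/-- extension by zero -/
noncomputable def extZ (N : ℕ) : (Site N → ℤ) →+ (ℤ → ℤ) where
  toFun φ k := if h : k ∈ Finset.Icc (-(N : ℤ)) N then φ ⟨k, h⟩ else 0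
  map_zero' := by funext k; simp
  map_add' φ ψ := by
    funext k
    simp only [Pi.add_apply]
    split_ifs <;> simp

lemma extZ_site (N : ℕ) (φ : Site N → ℤ) (i : Site N) : extZ N φ i.1 = φ i := by
  have := i.2
  simp only [extZ, AddMonoidHom.coe_mk, ZeroHom.coe_mk]
  rw [dif_pos this]

lemma extZ_out (N : ℕ) (φ : Site N → ℤ) (k : ℤ) (h : k ∉ Finset.Icc (-(N : ℤ)) N) :
    extZ N φ k = 0 := by
  simp only [extZ, AddMonoidHom.coe_mk, ZeroHom.coe_mk]
  rw [dif_neg h]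

/-- difference of heights -/
noncomputable def xdiff (N : ℕ) (p : ℤ × ℤ) : (Site N → ℤ) →+ ℤ where
  toFun φ := extZ N φ p.1 - extZ N φ p.2
  map_zero' := by simp
  map_add' φ ψ := by simp only [map_add, Pi.add_apply]; ring

/-- couplings -/
noncomputable def cpl (β α : ℝ) (p : ℤ × ℤ) : ℝ :=
  if p.1 = p.2 then 0 else β / |((p.1 - p.2 : ℤ) : ℝ)| ^ α

lemma cpl_nonneg {β : ℝ} (hβ : 0 ≤ β) (α : ℝ) (p : ℤ × ℤ) : 0 ≤ cpl β α p := by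
  unfold cpl; split_ifs <;> positivity

lemma sq_rpow_half (x q : ℝ) : (x ^ 2) ^ (q / 2) = |x| ^ q := by
  rw [← sq_abs, ← Real.rpow_natCast, ← Real.rpow_mul (abs_nonneg x)]
  congr 1; push_cast; ring

lemma chainEnergy_eq (β α q : ℝ) (N : ℕ) (φ : Site N → ℤ) :
    chainEnergy β α q (extZ N φ) = ∑' p, cpl β α p * ((xdiff N p φ : ℝ) ^ 2) ^ (q / 2) := by
  unfold chainEnergy
  rw [← tsum_mul_left]
  refine tsum_congr fun p => ?_
  rw [sq_rpow_half]
  unfold cpl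
  simp only [xdiff, AddMonoidHom.coe_mk, ZeroHom.coe_mk]
  split_ifs
  · simp
  · ring

lemma summable_half (N : ℕ) {α : ℝ} (hα : 1 < α) :
    Summable (fun p : ℤ × ℤ => (if p.1 ∈ Finset.Icc (-(N : ℤ)) N then (1 : ℝ) else 0) *
      |((p.1 - p.2 : ℤ) : ℝ)| ^ (-α)) := by
  have h1 : Summable (fun i : ℤ => if i ∈ Finset.Icc (-(N : ℤ)) N then (1 : ℝ) else 0) :=
    summable_of_ne_finset_zero (s := Finset.Icc (-(N : ℤ)) N) (fun b hb => if_neg hb)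
  have h2 := Real.summable_abs_int_rpow hα
  have h3 := h1.mul_of_nonneg h2 (fun i => by simp only [Pi.zero_apply]; split_ifs <;> simp)
    (fun i => by simp only [Pi.zero_apply]; positivity)
  let e : ℤ × ℤ ≃ ℤ × ℤ :=
    { toFun := fun p => (p.1, p.1 - p.2)
      invFun := fun p => (p.1, p.1 - p.2)
      left_inv := fun p => by simp
      right_inv := fun p => by simp }
  have := (e.summable_iff (f := _)).2 h3
  exact this

lemma summable_terms {β α q : ℝ} (hβ : 0 ≤ β) (hα : 1 < α) (hq : 0 < q) (N : ℕ) (φ : Site N → ℤ) :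
    Summable (fun p => cpl β α p * ((xdiff N p φ : ℝ) ^ 2) ^ (q / 2)) := by
  have hA := summable_half N hα
  have hB : Summable (fun p : ℤ × ℤ => (if p.2 ∈ Finset.Icc (-(N : ℤ)) N then (1 : ℝ) else 0) *
      |((p.1 - p.2 : ℤ) : ℝ)| ^ (-α)) := by
    have := ((Equiv.prodComm ℤ ℤ).summable_iff).2 hA
    refine this.congr fun p => ?_
    simp only [Function.comp, Equiv.prodComm_apply, Prod.swap]
    congr 2
    push_cast
    rw [abs_sub_comm]
  set M : ℝ := ∑ i, |(φ i : ℝ)| with hM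
  have hM0 : 0 ≤ M := Finset.sum_nonneg fun _ _ => abs_nonneg _
  have hb : ∀ k, |(extZ N φ k : ℝ)| ≤ M := by
    intro k
    by_cases h : k ∈ Finset.Icc (-(N : ℤ)) N
    · have := extZ_site N φ ⟨k, h⟩
      simp only at this
      rw [this]
      exact Finset.single_le_sum (f := fun i => |(φ i : ℝ)|) (fun _ _ => abs_nonneg _)
        (Finset.mem_univ (⟨k, h⟩ : Site N))
    · rw [extZ_out N φ k h]; simpa using hM0
  refine Summable.of_nonneg_of_le (fun p => mul_nonneg (cpl_nonneg hβ _ _) (by positivity)) ?_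
    ((hA.add hB).mul_left (β * (2 * M) ^ q))
  intro p
  rw [sq_rpow_half]
  by_cases hp : p.1 = p.2
  · simp only [cpl, if_pos hp, zero_mul]
    have : (0 : ℝ) ≤ (if p.1 ∈ Finset.Icc (-(N : ℤ)) N then (1 : ℝ) else 0) := by split_ifs <;> simp
    have : (0 : ℝ) ≤ (if p.2 ∈ Finset.Icc (-(N : ℤ)) N then (1 : ℝ) else 0) := by split_ifs <;> simp
    positivity
  simp only [cpl, if_neg hp]
  rw [← add_mul, Real.rpow_neg (abs_nonneg _)]
  have hd : 0 ≤ (|((p.1 - p.2 : ℤ) : ℝ)| ^ α)⁻¹ := by positivity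
  have key : |(xdiff N p φ : ℝ)| ^ q ≤ (2 * M) ^ q *
      ((if p.1 ∈ Finset.Icc (-(N : ℤ)) N then (1 : ℝ) else 0) +
       (if p.2 ∈ Finset.Icc (-(N : ℤ)) N then (1 : ℝ) else 0)) := by
    have h2 : |(xdiff N p φ : ℝ)| ^ q ≤ (2 * M) ^ q := by
      apply Real.rpow_le_rpow (abs_nonneg _) _ hq.le
      simp only [xdiff, AddMonoidHom.coe_mk, ZeroHom.coe_mk]
      push_cast
      have := abs_sub (extZ N φ p.1 : ℝ) (extZ N φ p.2 : ℝ)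
      linarith [hb p.1, hb p.2]
    have h3 : 0 ≤ (2 * M) ^ q := by positivity
    by_cases a1 : p.1 ∈ Finset.Icc (-(N : ℤ)) N
    · rw [if_pos a1]
      split_ifs <;> nlinarith
    · by_cases a2 : p.2 ∈ Finset.Icc (-(N : ℤ)) N
      · rw [if_pos a2, if_neg a1]; nlinarith
      · rw [if_neg a1, if_neg a2]
        simp only [xdiff, AddMonoidHom.coe_mk, ZeroHom.coe_mk, extZ_out N φ _ a1, extZ_out N φ _ a2]
        simp [Real.zero_rpow hq.ne']
  calc _ = β * (|((p.1 - p.2 : ℤ) : ℝ)| ^ α)⁻¹ * |(xdiff N p φ : ℝ)| ^ q := by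
        rw [div_eq_mul_inv]
    _ ≤ β * (|((p.1 - p.2 : ℤ) : ℝ)| ^ α)⁻¹ * ((2 * M) ^ q *
      ((if p.1 ∈ Finset.Icc (-(N : ℤ)) N then (1 : ℝ) else 0) +
       (if p.2 ∈ Finset.Icc (-(N : ℤ)) N then (1 : ℝ) else 0))) := by gcongr
    _ = _ := by ring

/-- finite boxes of pairs -/
noncomputable def boxF (n : ℕ) : Finset (ℤ × ℤ) := Finset.Icc (-(n : ℤ)) n ×ˢ Finset.Icc (-(n : ℤ)) n

lemma boxF_mono : Monotone boxF := by
  intro m n h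
  apply Finset.product_subset_product <;> apply Finset.Icc_subset_Icc <;> omega

lemma boxF_tendsto : Tendsto boxF atTop atTop := by
  apply tendsto_atTop_finset_of_monotone boxF_mono
  intro p
  refine ⟨p.1.natAbs + p.2.natAbs, ?_⟩
  simp only [boxF, Finset.mem_product, Finset.mem_Icc]
  omega

/-- coercivity constant -/
noncomputable def coerC (β α : ℝ) (N : ℕ) : ℝ := β / ((2 * N + 1 : ℕ) : ℝ) ^ α

lemma coercive {β α q : ℝ} (hβ : 0 ≤ β) (hα : 0 ≤ α) (N : ℕ) (φ : Site N → ℤ) (n : ℕ)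
    (hn : N + 1 ≤ n) :
    ∑ i, coerC β α N * |(φ i : ℝ)| ^ q
      ≤ ∑ p ∈ boxF n, cpl β α p * ((xdiff N p φ : ℝ) ^ 2) ^ (q / 2) := by
  let j : Site N → ℤ × ℤ := fun i => (i.1, (N : ℤ) + 1)
  have hj : Function.Injective j := by
    intro a b hab
    exact Subtype.ext (Prod.ext_iff.1 hab).1
  calc ∑ i, coerC β α N * |(φ i : ℝ)| ^ q
      ≤ ∑ i : Site N, cpl β α (j i) * ((xdiff N (j i) φ : ℝ) ^ 2) ^ (q / 2) := by
        apply Finset.sum_le_sum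
        intro i _
        rw [sq_rpow_half]
        have hi := Finset.mem_Icc.1 i.2
        have e1 : xdiff N (j i) φ = φ i := by
          simp only [xdiff, AddMonoidHom.coe_mk, ZeroHom.coe_mk, j]
          rw [extZ_site, extZ_out]
          · simp
          · simp
        rw [e1]
        apply mul_le_mul_of_nonneg_right _ (by positivity)
        unfold cpl coerC
        rw [if_neg (by simp only [j]; omega)]
        have hne : (0 : ℝ) < |(((j i).1 - (j i).2 : ℤ) : ℝ)| := by
          rw [abs_pos]
          exact_mod_cast (by simp only [j]; omega : (j i).1 - (j i).2 ≠ 0)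
        apply div_le_div_of_nonneg_left hβ (by positivity)
        apply Real.rpow_le_rpow (abs_nonneg _) _ hα
        rw [← Int.cast_abs]
        have : |(j i).1 - (j i).2| ≤ ((2 * N + 1 : ℕ) : ℤ) := by
          rw [abs_le]; simp only [j]; push_cast; omega
        exact_mod_cast this
    _ = ∑ p ∈ Finset.univ.map ⟨j, hj⟩, cpl β α p * ((xdiff N p φ : ℝ) ^ 2) ^ (q / 2) := by
        rw [Finset.sum_map]; rfl
    _ ≤ _ := by
        apply Finset.sum_le_sum_of_subset_of_nonneg
        · intro p hp
          rw [Finset.mem_map] at hp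
          obtain ⟨i, -, rfl⟩ := hp
          have hi := Finset.mem_Icc.1 i.2
          simp only [boxF, Finset.mem_product, Finset.mem_Icc, Function.Embedding.coeFn_mk, j]
          omega
        · intro p _ _
          exact mul_nonneg (cpl_nonneg hβ _ _) (by positivity)

lemma dom_summable {c q : ℝ} (hc : 0 < c) (hq : 0 < q) {I : Type*} [Fintype I] :
    Summable (fun φ : I → ℤ => (∏ i, (1 + (φ i : ℝ) ^ 2)) * Real.exp (-∑ i, c * |(φ i : ℝ)| ^ q)) := by
  have := (hasSum_pi (fun (_ : I) (x : ℤ) => (1 + (x : ℝ) ^ 2) * Real.exp (-(c * |(x : ℝ)| ^ q)))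
    (fun _ => summable_int_sq_exp hc hq)).summable
  refine this.congr fun φ => ?_
  rw [Finset.prod_mul_distrib, ← Finset.sum_neg_distrib, Real.exp_sum]

lemma dom_summable0 {c q : ℝ} (hc : 0 < c) (hq : 0 < q) {I : Type*} [Fintype I] :
    Summable (fun φ : I → ℤ => Real.exp (-∑ i, c * |(φ i : ℝ)| ^ q)) :=
  (dom_summable hc hq).of_nonneg_of_le (fun _ => (Real.exp_pos _).le)
    (fun φ => le_mul_of_one_le_left (Real.exp_pos _).le (one_le_prod_sq φ))

lemma dom_summable2 {c q : ℝ} (hc : 0 < c) (hq : 0 < q) {I : Type*} [Fintype I] (i0 : I) :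
    Summable (fun φ : I → ℤ => (φ i0 : ℝ) ^ 2 * Real.exp (-∑ i, c * |(φ i : ℝ)| ^ q)) :=
  (dom_summable hc hq).of_nonneg_of_le (fun _ => mul_nonneg (sq_nonneg _) (Real.exp_pos _).le)
    (fun φ => mul_le_mul_of_nonneg_right (sq_le_prod_sq φ i0) (Real.exp_pos _).le)

lemma weight_le {β α q : ℝ} (hβ : 0 < β) (hα : 1 < α) (hq : 0 < q) (N : ℕ) (φ : Site N → ℤ) :
    chainWeight β α q (extZ N φ) ≤ Real.exp (-∑ i, coerC β α N * |(φ i : ℝ)| ^ q) := by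
  unfold chainWeight
  rw [chainEnergy_eq]
  apply Real.exp_le_exp.2
  apply neg_le_neg
  refine (coercive hβ.le (by linarith) N φ (N + 1) le_rfl).trans ?_
  exact (summable_terms hβ.le hα hq N φ).sum_le_tsum _
    (fun p _ => mul_nonneg (cpl_nonneg hβ.le _ _) (by positivity))

lemma coerC_pos {β : ℝ} (hβ : 0 < β) (α : ℝ) (N : ℕ) : 0 < coerC β α N := by
  unfold coerC; positivity

lemma weight_summable {β α q : ℝ} (hβ : 0 < β) (hα : 1 < α) (hq : 0 < q) (N : ℕ) :
    Summable (fun φ : Site N → ℤ => chainWeight β α q (extZ N φ)) :=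
  (dom_summable0 (coerC_pos hβ α N) hq).of_nonneg_of_le (fun _ => (Real.exp_pos _).le)
    (fun φ => weight_le hβ hα hq N φ)

lemma second_limit {β α q C : ℝ} (hβ : 0 < β) (hα : 1 < α) (hq : 0 < q) (hq2 : q < 2) (N : ℕ)
    {K : Type*} [Fintype K] [DecidableEq K] (l : (K → ℤ) →+ (Site N → ℤ))
    (hl : Function.Injective l) (i0 : Site N)
    (e0 : Site N → Finset K) (he : ∀ i X, l X i = ∑ k ∈ e0 i, X k) (he0 : e0 i0 = Finset.univ)
    (e : ℤ × ℤ → Finset K) (hx : ∀ p X, (xdiff N p (l X)) ^ 2 = (∑ k ∈ e p, X k) ^ 2)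
    (hC : ∀ k n, ∑ p ∈ boxF n, cpl β α p * (rhoC (e p) k) ^ (q / 2) ≤ C) :
    (2 / 3 * (Fintype.card K * Real.exp (-C))) * ∑' φ : Site N → ℤ, chainWeight β α q (extZ N φ)
      ≤ ∑' φ : Site N → ℤ, (φ i0 : ℝ) ^ 2 * chainWeight β α q (extZ N φ) := by
  have td : Tendsto (fun n : ℕ => 1 / ((n : ℝ) + 1)) atTop (𝓝 0) :=
    tendsto_one_div_add_atTop_nhds_zero_nat
  refine limit_lemma (fun φ : Site N → ℤ => (φ i0 : ℝ))
    (fun n φ => Real.exp (-∑ i, (1 / ((n : ℝ) + 1)) * (φ i : ℝ) ^ 2) *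
      ∏ p ∈ boxF n, Real.exp (-(cpl β α p * ((xdiff N p φ : ℝ) ^ 2) ^ (q / 2)))) _
    (fun φ => Real.exp (-∑ i, coerC β α N * |(φ i : ℝ)| ^ q))
    (fun n => 2 / 3 * ∑ k, Real.exp (-∑ i, (1 / ((n : ℝ) + 1)) * rhoC (e0 i) k) * Real.exp (-C)) _
    ?_ ?_ ?_ ?_ ?_ ?_
  · intro φ
    have a1 : Tendsto (fun n : ℕ => Real.exp (-∑ i, (1 / ((n : ℝ) + 1)) * (φ i : ℝ) ^ 2)) atTop
        (𝓝 (Real.exp (-∑ i, 0 * (φ i : ℝ) ^ 2))) :=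
      (Real.continuous_exp.tendsto _).comp
        (tendsto_finsetSum _ fun i _ => td.mul_const _).neg
    have a2 : Tendsto (fun n : ℕ => ∏ p ∈ boxF n,
        Real.exp (-(cpl β α p * ((xdiff N p φ : ℝ) ^ 2) ^ (q / 2)))) atTop
        (𝓝 (chainWeight β α q (extZ N φ))) := by
      unfold chainWeight
      rw [chainEnergy_eq]
      have := ((summable_terms hβ.le hα hq N φ).hasSum.comp boxF_tendsto).neg
      refine ((Real.continuous_exp.tendsto _).comp this).congr fun n => ?_
      simp only [Function.comp]
      rw [← Finset.sum_neg_distrib, Real.exp_sum]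
    simpa using a1.mul a2
  · filter_upwards [eventually_ge_atTop (N + 1)] with n hn φ
    refine ⟨by positivity, ?_⟩
    rw [← Real.exp_sum, Finset.sum_neg_distrib]
    have h1 := coercive (q := q) hβ.le (by linarith : 0 ≤ α) N φ n hn
    have h2 : Real.exp (-∑ i, (1 / ((n : ℝ) + 1)) * (φ i : ℝ) ^ 2) ≤ 1 := by
      rw [Real.exp_le_one_iff]
      have : 0 ≤ ∑ i, (1 / ((n : ℝ) + 1)) * (φ i : ℝ) ^ 2 :=
        Finset.sum_nonneg fun i _ => by positivity
      linarith
    refine (mul_le_of_le_one_left (Real.exp_pos _).le h2).trans ?_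
    exact Real.exp_le_exp.2 (neg_le_neg h1)
  · exact dom_summable0 (coerC_pos hβ α N) hq
  · exact dom_summable2 (coerC_pos hβ α N) hq i0
  · have : ∀ k, Tendsto (fun n : ℕ => Real.exp (-∑ i, (1 / ((n : ℝ) + 1)) * rhoC (e0 i) k) *
        Real.exp (-C)) atTop (𝓝 (Real.exp (-∑ i, 0 * rhoC (e0 i) k) * Real.exp (-C))) := fun k =>
      ((Real.continuous_exp.tendsto _).comp
        (tendsto_finsetSum _ fun i _ => td.mul_const _).neg).mul_const _
    have := (tendsto_finsetSum Finset.univ fun k _ => this k).const_mul (2 / 3)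
    simpa using this
  · refine Eventually.of_forall fun n => ?_
    have := first_limit (δ := 1 / ((n : ℝ) + 1)) (θ := q / 2) (by positivity) (by linarith)
      (by linarith) l hl i0 e0 he he0 (cpl β α) (cpl_nonneg hβ.le α) (xdiff N) e hx (boxF n)
    refine le_trans ?_ this
    apply mul_le_mul_of_nonneg_right _ (tsum_nonneg fun φ => by positivity)
    apply mul_le_mul_of_nonneg_left _ (by norm_num)
    apply Finset.sum_le_sum
    intro k _
    apply mul_le_mul_of_nonneg_left _ (Real.exp_pos _).le
    rw [← Real.exp_sum, Finset.sum_neg_distrib]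
    exact Real.exp_le_exp.2 (neg_le_neg (hC k n))

/-- configurations as functions on sites -/
noncomputable def cfgEquiv (N : ℕ) : (Site N → ℤ) ≃ ChainConfig N where
  toFun φ := ⟨extZ N φ, fun k hk => extZ_out N φ k (by
    rw [Finset.mem_Icc, ← abs_le]; omega)⟩
  invFun ψ := fun i => ψ.1 i.1
  left_inv φ := by funext i; exact extZ_site N φ i
  right_inv ψ := by
    apply Subtype.ext
    funext k
    by_cases h : k ∈ Finset.Icc (-(N : ℤ)) N
    · exact extZ_site N _ ⟨k, h⟩
    · rw [show (⟨extZ N fun i => ψ.1 i.1, _⟩ : ChainConfig N).1 k = 0 from extZ_out N _ k h]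
      rw [Finset.mem_Icc, ← abs_le, not_le] at h
      exact (ψ.2 k h).symm

/-- origin -/
noncomputable def orig (N : ℕ) : Site N := ⟨0, by simp⟩

lemma chainEnergy_neg (β α q : ℝ) (φ : ℤ → ℤ) : chainEnergy β α q (-φ) = chainEnergy β α q φ := by
  unfold chainEnergy
  congr 1
  refine tsum_congr fun p => ?_
  have : |(((-φ) p.1 - (-φ) p.2 : ℤ) : ℝ)| = |((φ p.1 - φ p.2 : ℤ) : ℝ)| := by
    simp only [Pi.neg_apply]
    push_cast
    rw [← abs_neg]; congr 1; ring
  rw [this]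

lemma chainMean_zero (β α q : ℝ) (N : ℕ) : chainMean N β α q = 0 := by
  unfold chainMean
  rw [← (cfgEquiv N).tsum_eq (fun φ : ChainConfig N => ((φ.val 0 : ℤ) : ℝ) * chainWeight β α q φ.val)]
  have h : ∀ φ : Site N → ℤ, ((((cfgEquiv N) φ).val 0 : ℤ) : ℝ) * chainWeight β α q ((cfgEquiv N) φ).val
      = ((extZ N φ 0 : ℤ) : ℝ) * chainWeight β α q (extZ N φ) := fun φ => rfl
  rw [tsum_congr h]
  have h2 := (Equiv.neg (Site N → ℤ)).tsum_eq
    (fun φ : Site N → ℤ => ((extZ N φ 0 : ℤ) : ℝ) * chainWeight β α q (extZ N φ))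
  have h3 : ∀ φ : Site N → ℤ, ((extZ N (Equiv.neg _ φ) 0 : ℤ) : ℝ) * chainWeight β α q (extZ N (Equiv.neg _ φ))
      = -(((extZ N φ 0 : ℤ) : ℝ) * chainWeight β α q (extZ N φ)) := by
    intro φ
    simp only [Equiv.neg_apply, map_neg, Pi.neg_apply, chainWeight, chainEnergy_neg]
    push_cast; ring
  rw [tsum_congr h3, tsum_neg] at h2
  rw [show (∑' φ : Site N → ℤ, ((extZ N φ 0 : ℤ) : ℝ) * chainWeight β α q (extZ N φ)) = 0 by linarith]
  simp

lemma chainVar_ge {β α q r : ℝ} (hβ : 0 < β) (hα : 1 < α) (hq : 0 < q) (N : ℕ)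
    (h : r * ∑' φ : Site N → ℤ, chainWeight β α q (extZ N φ)
      ≤ ∑' φ : Site N → ℤ, (φ (orig N) : ℝ) ^ 2 * chainWeight β α q (extZ N φ)) :
    r ≤ chainVar N β α q := by
  unfold chainVar
  rw [chainMean_zero]
  unfold chainZ
  rw [← (cfgEquiv N).tsum_eq (fun φ : ChainConfig N => ((φ.val 0 : ℤ) : ℝ) ^ 2 * chainWeight β α q φ.val),
    ← (cfgEquiv N).tsum_eq (fun φ : ChainConfig N => chainWeight β α q φ.val)]
  have h1 : ∀ φ : Site N → ℤ, ((((cfgEquiv N) φ).val 0 : ℤ) : ℝ) ^ 2 * chainWeight β α q ((cfgEquiv N) φ).val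
      = (φ (orig N) : ℝ) ^ 2 * chainWeight β α q (extZ N φ) := fun φ => by
    have := extZ_site N φ (orig N)
    rw [show ((cfgEquiv N) φ).val 0 = φ (orig N) from this]
    rfl
  have h2 : ∀ φ : Site N → ℤ, chainWeight β α q ((cfgEquiv N) φ).val
      = chainWeight β α q (extZ N φ) := fun φ => rfl
  rw [tsum_congr h1, tsum_congr h2]
  have hpos : 0 < ∑' φ : Site N → ℤ, chainWeight β α q (extZ N φ) :=
    (weight_summable hβ hα hq N).tsum_pos (fun _ => (Real.exp_pos _).le) 0 (Real.exp_pos _)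
  rw [zero_pow (by norm_num), sub_zero, le_div_iff₀ hpos]
  exact h

/-- level sets of the coarse profile -/
def eS (ℓ m : ℕ) (i : ℤ) : Finset (Fin m) :=
  Finset.univ.filter fun k => i.natAbs < (k.1 + 1) * ℓ

/-- increments seen by a pair -/
def ePair (ℓ m : ℕ) (p : ℤ × ℤ) : Finset (Fin m) :=
  Finset.univ.filter fun k => min p.1.natAbs p.2.natAbs < (k.1 + 1) * ℓ ∧
    (k.1 + 1) * ℓ ≤ max p.1.natAbs p.2.natAbs

/-- coarse profile map -/
noncomputable def lMap (N ℓ m : ℕ) : (Fin m → ℤ) →+ (Site N → ℤ) where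
  toFun X i := ∑ k ∈ eS ℓ m i.1, X k
  map_zero' := by funext i; simp
  map_add' X Y := by funext i; simp [Finset.sum_add_distrib]

lemma ext_lMap {N ℓ m : ℕ} (hm : m * ℓ ≤ N + 1) (X : Fin m → ℤ) (i : ℤ) :
    extZ N (lMap N ℓ m X) i = ∑ k ∈ eS ℓ m i, X k := by
  by_cases h : i ∈ Finset.Icc (-(N : ℤ)) N
  · exact extZ_site N _ ⟨i, h⟩
  · rw [extZ_out N _ i h]
    have : eS ℓ m i = ∅ := by
      unfold eS
      rw [Finset.filter_eq_empty_iff]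
      intro k _
      have h1 : (k.1 + 1) * ℓ ≤ m * ℓ := Nat.mul_le_mul_right _ k.2
      rw [Finset.mem_Icc] at h
      omega
    rw [this]; simp

lemma lMap_inj {N ℓ m : ℕ} (hm : m * ℓ ≤ N + 1) (hℓ : 0 < ℓ) : Function.Injective (lMap N ℓ m) := by
  intro X Y h
  have key : ∀ (Z : Fin m → ℤ) (k : Fin m), Z k = extZ N (lMap N ℓ m Z) ((k.1 * ℓ : ℕ) : ℤ)
      - extZ N (lMap N ℓ m Z) (((k.1 + 1) * ℓ : ℕ) : ℤ) := by
    intro Z k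
    rw [ext_lMap hm, ext_lMap hm]
    have : eS ℓ m ((k.1 * ℓ : ℕ) : ℤ) = insert k (eS ℓ m (((k.1 + 1) * ℓ : ℕ) : ℤ)) := by
      ext j
      simp only [eS, Finset.mem_filter, Finset.mem_univ, true_and, Finset.mem_insert, Int.natAbs_natCast,
        Nat.mul_lt_mul_right hℓ]
      rw [Fin.ext_iff]; omega
    rw [this, Finset.sum_insert]
    · ring
    · simp only [eS, Finset.mem_filter, Int.natAbs_natCast, lt_irrefl, and_false, not_false_eq_true]
  funext k
  rw [key X k, key Y k, h]

lemma pair_sq {N ℓ m : ℕ} (hm : m * ℓ ≤ N + 1) (p : ℤ × ℤ) (X : Fin m → ℤ) :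
    (xdiff N p (lMap N ℓ m X)) ^ 2 = (∑ k ∈ ePair ℓ m p, X k) ^ 2 := by
  have hx : xdiff N p (lMap N ℓ m X) = ∑ k ∈ eS ℓ m p.1, X k - ∑ k ∈ eS ℓ m p.2, X k := by
    simp only [xdiff, AddMonoidHom.coe_mk, ZeroHom.coe_mk]
    rw [ext_lMap hm, ext_lMap hm]
  rw [hx]
  have main : ∀ i j : ℤ, i.natAbs ≤ j.natAbs →
      ∑ k ∈ eS ℓ m i, X k - ∑ k ∈ eS ℓ m j, X k = ∑ k ∈ ePair ℓ m (i, j), X k := by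
    intro i j hij
    have hsub : eS ℓ m j ⊆ eS ℓ m i := by
      intro k
      simp only [eS, Finset.mem_filter, Finset.mem_univ, true_and]
      omega
    have : ePair ℓ m (i, j) = eS ℓ m i \ eS ℓ m j := by
      ext k
      simp only [eS, ePair, Finset.mem_filter, Finset.mem_univ, true_and, Finset.mem_sdiff, not_lt,
        min_eq_left hij, max_eq_right hij]
    rw [this, ← Finset.sum_sdiff hsub]; ring
  rcases le_total p.1.natAbs p.2.natAbs with h | h
  · rw [main _ _ h]
  · have e1 : ePair ℓ m p = ePair ℓ m (p.2, p.1) := by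
      simp only [ePair, min_comm, max_comm]
    rw [e1, ← main _ _ h]; ring

lemma eS_zero {ℓ m : ℕ} (hℓ : 0 < ℓ) : eS ℓ m 0 = Finset.univ := by
  unfold eS
  rw [Finset.filter_true_of_mem]
  intro k _
  simpa using hℓ

lemma var_of_bound {β α q C : ℝ} (hβ : 0 < β) (hα : 1 < α) (hq : 0 < q) (hq2 : q < 2) (N ℓ m : ℕ)
    (hm : m * ℓ ≤ N + 1) (hℓ : 0 < ℓ)
    (hC : ∀ k n, ∑ p ∈ boxF n, cpl β α p * (rhoC (ePair ℓ m p) k) ^ (q / 2) ≤ C) :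
    2 / 3 * ((m : ℝ) * Real.exp (-C)) ≤ chainVar N β α q := by
  apply chainVar_ge hβ hα hq
  have := second_limit hβ hα hq hq2 N (lMap N ℓ m) (lMap_inj hm hℓ) (orig N) (fun i => eS ℓ m i.1)
    (fun i X => rfl) (eS_zero hℓ) (ePair ℓ m) (pair_sq hm) hC
  simpa using this

/-- majorant of pair terms -/
noncomputable def hMaj (β θ : ℝ) (ℓ A a c : ℕ) : ℝ :=
  if a < A ∧ A ≤ c then β * ((ℓ : ℝ) ^ (-θ) + ((A : ℝ) - a) ^ (-θ)) * (((c : ℝ) - a) ^ 2)⁻¹ else 0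

lemma hMaj_nonneg {β : ℝ} (hβ : 0 ≤ β) (θ : ℝ) (ℓ A a c : ℕ) : 0 ≤ hMaj β θ ℓ A a c := by
  unfold hMaj
  split_ifs with h
  · have : (0 : ℝ) ≤ (A : ℝ) - a := by
      have : (a : ℝ) < A := by exact_mod_cast h.1
      linarith
    positivity
  · exact le_rfl

lemma card_ePair {ℓ m a c : ℕ} (hℓ : 0 < ℓ) (hac : a ≤ c) :
    ((Finset.univ.filter fun k : Fin m => a < (k.1 + 1) * ℓ ∧ (k.1 + 1) * ℓ ≤ c).card : ℝ)
      ≤ ((c : ℝ) - a) / ℓ + 1 := by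
  have h1 : (Finset.univ.filter fun k : Fin m => a < (k.1 + 1) * ℓ ∧ (k.1 + 1) * ℓ ≤ c).card
      ≤ (Finset.Ioc (a / ℓ) (c / ℓ)).card := by
    apply Finset.card_le_card_of_injOn (fun k => k.1 + 1)
    · intro k hk
      simp only [Finset.coe_filter, Finset.mem_univ, true_and, Set.mem_ofPred_eq] at hk
      simp only [Finset.coe_Ioc, Set.mem_Ioc]
      exact ⟨(Nat.div_lt_iff_lt_mul hℓ).2 hk.1, (Nat.le_div_iff_mul_le hℓ).2 hk.2⟩
    · intro k _ j _ hkj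
      apply Fin.ext
      simpa using hkj
  rw [Nat.card_Ioc] at h1
  have h2 : ((c / ℓ - a / ℓ : ℕ) : ℝ) ≤ ((c : ℝ) - a) / ℓ + 1 := by
    rw [Nat.cast_sub (Nat.div_le_div_right hac)]
    have a1 : ((c / ℓ : ℕ) : ℝ) ≤ (c : ℝ) / ℓ := Nat.cast_div_le
    have a2 : (a : ℝ) / ℓ < ((a / ℓ : ℕ) : ℝ) + 1 := by
      rw [div_lt_iff₀ (by positivity)]
      have := Nat.lt_div_mul_add (a := a) hℓ
      have : a < (a / ℓ + 1) * ℓ := by rw [add_mul, one_mul]; exact this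
      exact_mod_cast this
    rw [sub_div]; linarith
  exact le_trans (by exact_mod_cast h1) h2

lemma core_real {β θ : ℝ} (hβ : 0 ≤ β) (h0 : 0 < θ) (h1 : θ < 1) (L d u R D : ℝ) (hL : 0 < L)
    (hu : 0 < u) (hud : u ≤ d) (hR0 : 0 ≤ R) (hR : R ≤ d / L + 1) (hD : d ≤ D) :
    β / D ^ (2 + θ) * R ^ θ ≤ β * (L ^ (-θ) + u ^ (-θ)) * (d ^ 2)⁻¹ := by
  have hd : 0 < d := by linarith
  have e1 : β / D ^ (2 + θ) ≤ β / d ^ (2 + θ) :=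
    div_le_div_of_nonneg_left hβ (by positivity) (Real.rpow_le_rpow hd.le hD (by linarith))
  have e2 : R ^ θ ≤ (d / L) ^ θ + 1 := by
    refine (Real.rpow_le_rpow hR0 hR h0.le).trans ?_
    have := Real.rpow_add_le_add_rpow (p := θ) (by positivity : 0 ≤ d / L) zero_le_one h0.le h1.le
    simpa using this
  have e3 : d ^ (-θ) ≤ u ^ (-θ) := Real.rpow_le_rpow_of_nonpos hu hud (by linarith)
  calc β / D ^ (2 + θ) * R ^ θ ≤ β / d ^ (2 + θ) * ((d / L) ^ θ + 1) := by
        gcongr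
    _ = β * (L ^ (-θ) + d ^ (-θ)) * (d ^ 2)⁻¹ := by
        rw [Real.rpow_add hd, Real.div_rpow hd.le hL.le, Real.rpow_neg hL.le, Real.rpow_neg hd.le]
        have : (d : ℝ) ^ (2 : ℝ) = d ^ 2 := by exact_mod_cast Real.rpow_natCast d 2
        rw [this]
        have : 0 < d ^ θ := by positivity
        have : 0 < L ^ θ := by positivity
        field_simp
    _ ≤ _ := by gcongr

lemma term_le {β θ : ℝ} (hβ : 0 ≤ β) (h0 : 0 < θ) (h1 : θ < 1) {ℓ m : ℕ} (hℓ : 0 < ℓ) (k : Fin m)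
    (p : ℤ × ℤ) :
    cpl β (2 + θ) p * (rhoC (ePair ℓ m p) k) ^ θ
      ≤ hMaj β θ ℓ ((k.1 + 1) * ℓ) p.1.natAbs p.2.natAbs
        + hMaj β θ ℓ ((k.1 + 1) * ℓ) p.2.natAbs p.1.natAbs := by
  by_cases hk : k ∈ ePair ℓ m p
  swap
  · unfold rhoC
    rw [if_neg hk, Real.zero_rpow h0.ne', mul_zero]
    exact add_nonneg (hMaj_nonneg hβ _ _ _ _ _) (hMaj_nonneg hβ _ _ _ _ _)
  have main : ∀ a c : ℕ, min p.1.natAbs p.2.natAbs = a → max p.1.natAbs p.2.natAbs = c →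
      cpl β (2 + θ) p * (rhoC (ePair ℓ m p) k) ^ θ ≤ hMaj β θ ℓ ((k.1 + 1) * ℓ) a c := by
    intro a c ha hc
    have hk' := hk
    simp only [ePair, Finset.mem_filter, Finset.mem_univ, true_and, ha, hc] at hk'
    unfold rhoC hMaj
    rw [if_pos hk, if_pos hk']
    have hac : a ≤ c := by omega
    have hne : p.1 ≠ p.2 := by
      intro h
      rw [h] at ha hc
      simp at ha hc
      omega
    unfold cpl
    rw [if_neg hne]
    have hcard := card_ePair (m := m) hℓ hac
    have r1 : (a : ℝ) < (((k.1 + 1) * ℓ : ℕ) : ℝ) := by exact_mod_cast hk'.1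
    have r2 : (((k.1 + 1) * ℓ : ℕ) : ℝ) ≤ c := by exact_mod_cast hk'.2
    have hep : ePair ℓ m p
        = Finset.univ.filter fun k : Fin m => a < (k.1 + 1) * ℓ ∧ (k.1 + 1) * ℓ ≤ c := by
      simp only [ePair, ha, hc]
    rw [hep]
    apply core_real hβ h0 h1
    · exact_mod_cast hℓ
    · linarith
    · linarith
    · positivity
    · exact hcard
    · rw [← Int.cast_abs]
      have : (c : ℤ) - a ≤ |p.1 - p.2| := by rw [Int.abs_eq_natAbs]; omega
      exact_mod_cast this
  rcases le_total p.1.natAbs p.2.natAbs with h | h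
  · refine (main _ _ (min_eq_left h) (max_eq_right h)).trans ?_
    have := hMaj_nonneg hβ θ ℓ ((k.1 + 1) * ℓ) p.2.natAbs p.1.natAbs
    linarith
  · refine (main _ _ (min_eq_right h) (max_eq_left h)).trans ?_
    have := hMaj_nonneg hβ θ ℓ ((k.1 + 1) * ℓ) p.1.natAbs p.2.natAbs
    linarith

lemma sum_natAbs_le (f : ℕ → ℝ) (hf : ∀ a, 0 ≤ f a) (n : ℕ) :
    ∑ i ∈ Finset.Icc (-(n : ℤ)) n, f i.natAbs ≤ 2 * ∑ a ∈ Finset.range (n + 1), f a := by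
  have hsub : Finset.Icc (-(n : ℤ)) n ⊆ (Finset.range (n + 1)).image (fun a : ℕ => (a : ℤ)) ∪
      (Finset.range (n + 1)).image (fun a : ℕ => -(a : ℤ)) := by
    intro i hi
    rw [Finset.mem_Icc] at hi
    rw [Finset.mem_union, Finset.mem_image, Finset.mem_image]
    rcases le_total 0 i with h | h
    · exact Or.inl ⟨i.natAbs, by rw [Finset.mem_range]; omega, by omega⟩
    · exact Or.inr ⟨i.natAbs, by rw [Finset.mem_range]; omega, by omega⟩
  refine (Finset.sum_le_sum_of_subset_of_nonneg hsub fun _ _ _ => hf _).trans ?_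
  have h1 := Finset.sum_union_inter (s₁ := (Finset.range (n + 1)).image (fun a : ℕ => (a : ℤ)))
      (s₂ := (Finset.range (n + 1)).image (fun a : ℕ => -(a : ℤ))) (f := fun i : ℤ => f i.natAbs)
  have h2 : 0 ≤ ∑ i ∈ (Finset.range (n + 1)).image (fun a : ℕ => (a : ℤ)) ∩
      (Finset.range (n + 1)).image (fun a : ℕ => -(a : ℤ)), f i.natAbs :=
    Finset.sum_nonneg fun _ _ => hf _
  rw [Finset.sum_image (by intro a _ b _ h; simpa using h),
    Finset.sum_image (by intro a _ b _ h; simpa using h)] at h1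
  simp only [Int.natAbs_neg, Int.natAbs_natCast] at h1
  linarith

lemma sum_box_le (f : ℕ → ℕ → ℝ) (hf : ∀ a c, 0 ≤ f a c) (n : ℕ) :
    ∑ p ∈ boxF n, f p.1.natAbs p.2.natAbs
      ≤ 4 * ∑ a ∈ Finset.range (n + 1), ∑ c ∈ Finset.range (n + 1), f a c := by
  unfold boxF
  rw [Finset.sum_product]
  calc _ ≤ ∑ i ∈ Finset.Icc (-(n : ℤ)) n, 2 * ∑ c ∈ Finset.range (n + 1), f i.natAbs c :=
        Finset.sum_le_sum fun i _ => sum_natAbs_le (f i.natAbs) (hf _) n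
    _ = 2 * ∑ i ∈ Finset.Icc (-(n : ℤ)) n, ∑ c ∈ Finset.range (n + 1), f i.natAbs c := by
        rw [Finset.mul_sum]
    _ ≤ 2 * (2 * ∑ a ∈ Finset.range (n + 1), ∑ c ∈ Finset.range (n + 1), f a c) := by
        gcongr
        exact sum_natAbs_le (fun a => ∑ c ∈ Finset.range (n + 1), f a c)
          (fun a => Finset.sum_nonneg fun c _ => hf a c) n
    _ = _ := by ring

lemma inner_le {β θ : ℝ} (hβ : 0 ≤ β) (ℓ A a n : ℕ) (h : a < A) :
    ∑ c ∈ Finset.range (n + 1), hMaj β θ ℓ A a c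
      ≤ β * ((ℓ : ℝ) ^ (-θ) + ((A : ℝ) - a) ^ (-θ)) * (2 / ((A : ℝ) - a)) := by
  obtain ⟨u, rfl⟩ : ∃ u, A = u + 1 + a := ⟨A - a - 1, by omega⟩
  have hu : ((u + 1 + a : ℕ) : ℝ) - a = (u : ℝ) + 1 := by push_cast; ring
  rw [hu]
  have hnn : 0 ≤ β * ((ℓ : ℝ) ^ (-θ) + ((u : ℝ) + 1) ^ (-θ)) := by positivity
  have key : ∑ c ∈ Finset.Ico (u + 1 + a) (n + 1 + a), (((c : ℝ) - a) ^ 2)⁻¹ ≤ 2 / ((u : ℝ) + 1) := by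
    rw [← Finset.sum_Ico_add' (fun c : ℕ => (((c : ℝ) - a) ^ 2)⁻¹) (u + 1) (n + 1) a]
    have : Finset.Ico (u + 1) (n + 1) = Finset.Ioo u (n + 1) := by
      ext x; simp only [Finset.mem_Ico, Finset.mem_Ioo]; omega
    rw [this]
    simpa using sum_Ioo_inv_sq_le (α := ℝ) u (n + 1)
  calc ∑ c ∈ Finset.range (n + 1), hMaj β θ ℓ (u + 1 + a) a c
      = ∑ c ∈ (Finset.range (n + 1)).filter (fun c => u + 1 + a ≤ c),
        β * ((ℓ : ℝ) ^ (-θ) + ((u : ℝ) + 1) ^ (-θ)) * (((c : ℝ) - a) ^ 2)⁻¹ := by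
        rw [Finset.sum_filter]
        refine Finset.sum_congr rfl fun c _ => ?_
        unfold hMaj
        rw [hu]
        simp only [h, true_and]
    _ ≤ ∑ c ∈ Finset.Ico (u + 1 + a) (n + 1 + a),
        β * ((ℓ : ℝ) ^ (-θ) + ((u : ℝ) + 1) ^ (-θ)) * (((c : ℝ) - a) ^ 2)⁻¹ := by
        apply Finset.sum_le_sum_of_subset_of_nonneg
        · intro c hc
          simp only [Finset.mem_filter, Finset.mem_range] at hc
          rw [Finset.mem_Ico]; omega
        · intro c _ _
          positivity
    _ ≤ _ := by
        rw [← Finset.mul_sum]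
        exact mul_le_mul_of_nonneg_left key hnn

/-- zeta-like constant -/
noncomputable def zS (θ : ℝ) : ℝ := ∑' j : ℕ, ((j : ℝ) + 1) ^ (-(1 + θ))

lemma outer_le {β θ : ℝ} (hβ : 0 ≤ β) (h0 : 0 < θ) (ℓ A n : ℕ) :
    ∑ a ∈ Finset.range (n + 1), ∑ c ∈ Finset.range (n + 1), hMaj β θ ℓ A a c
      ≤ 2 * β * ((ℓ : ℝ) ^ (-θ) * (1 + Real.log A) + zS θ) := by
  have hinner : ∀ a, 0 ≤ ∑ c ∈ Finset.range (n + 1), hMaj β θ ℓ A a c := fun a =>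
    Finset.sum_nonneg fun c _ => hMaj_nonneg hβ _ _ _ _ _
  have hz : ∀ a, ¬ a < A → ∑ c ∈ Finset.range (n + 1), hMaj β θ ℓ A a c = 0 := by
    intro a ha
    apply Finset.sum_eq_zero
    intro c _
    unfold hMaj
    rw [if_neg (fun h => ha h.1)]
  have s1 : ∑ a ∈ Finset.range (n + 1), ∑ c ∈ Finset.range (n + 1), hMaj β θ ℓ A a c
      ≤ ∑ a ∈ Finset.range A, ∑ c ∈ Finset.range (n + 1), hMaj β θ ℓ A a c := by
    rw [← Finset.sum_filter_add_sum_filter_not (Finset.range (n + 1)) (fun a => a < A)]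
    rw [Finset.sum_eq_zero (s := (Finset.range (n + 1)).filter (fun a => ¬ a < A))
      (fun a ha => hz a (Finset.mem_filter.1 ha).2), add_zero]
    apply Finset.sum_le_sum_of_subset_of_nonneg
    · intro a ha
      exact Finset.mem_range.2 (Finset.mem_filter.1 ha).2
    · intro a _ _; exact hinner a
  have s2 : ∑ a ∈ Finset.range A, ∑ c ∈ Finset.range (n + 1), hMaj β θ ℓ A a c
      ≤ ∑ j ∈ Finset.range A, β * ((ℓ : ℝ) ^ (-θ) + ((j : ℝ) + 1) ^ (-θ)) * (2 / ((j : ℝ) + 1)) := by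
    rw [← Finset.sum_range_reflect (fun j : ℕ => β * ((ℓ : ℝ) ^ (-θ) + ((j : ℝ) + 1) ^ (-θ)) * (2 / ((j : ℝ) + 1)))]
    apply Finset.sum_le_sum
    intro a ha
    have ha' := Finset.mem_range.1 ha
    have := inner_le (θ := θ) hβ ℓ A a n ha'
    have e : ((A - 1 - a : ℕ) : ℝ) + 1 = (A : ℝ) - a := by
      have : A - 1 - a + 1 + a = A := by omega
      have : ((A - 1 - a : ℕ) : ℝ) + 1 + a = A := by exact_mod_cast this
      linarith
    rw [e]; exact this
  have s3 : ∀ j : ℕ, β * ((ℓ : ℝ) ^ (-θ) + ((j : ℝ) + 1) ^ (-θ)) * (2 / ((j : ℝ) + 1))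
      = 2 * β * ((ℓ : ℝ) ^ (-θ) * ((j : ℝ) + 1)⁻¹ + ((j : ℝ) + 1) ^ (-(1 + θ))) := by
    intro j
    rw [show -(1 + θ) = -θ + -1 by ring, Real.rpow_add (by positivity), Real.rpow_neg_one]
    field_simp
  have s4 : ∑ j ∈ Finset.range A, ((j : ℝ) + 1)⁻¹ ≤ 1 + Real.log A := by
    have := harmonic_le_one_add_log A
    unfold harmonic at this
    push_cast at this
    exact this
  have s5 : ∑ j ∈ Finset.range A, ((j : ℝ) + 1) ^ (-(1 + θ)) ≤ zS θ := by
    have hs : Summable (fun j : ℕ => ((j : ℝ) + 1) ^ (-(1 + θ))) := by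
      have := (summable_nat_add_iff 1).2 (Real.summable_nat_rpow (p := -(1 + θ)).2 (by linarith))
      simpa using this
    exact hs.sum_le_tsum _ fun _ _ => by positivity
  refine s1.trans (s2.trans ?_)
  rw [Finset.sum_congr rfl fun j _ => s3 j, ← Finset.mul_sum, Finset.sum_add_distrib, ← Finset.mul_sum]
  gcongr

lemma bound_C {β θ : ℝ} (hβ : 0 ≤ β) (h0 : 0 < θ) (h1 : θ < 1) {ℓ m N : ℕ} (hℓ : 0 < ℓ)
    (hm : m * ℓ ≤ N + 1) (k : Fin m) (n : ℕ) :
    ∑ p ∈ boxF n, cpl β (2 + θ) p * (rhoC (ePair ℓ m p) k) ^ θ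
      ≤ 16 * β * ((ℓ : ℝ) ^ (-θ) * (1 + Real.log ((N : ℝ) + 1)) + zS θ) := by
  have hA : (k.1 + 1) * ℓ ≤ N + 1 := (Nat.mul_le_mul_right _ k.2).trans hm
  have hA0 : 0 < (k.1 + 1) * ℓ := by positivity
  have hlog : Real.log (((k.1 + 1) * ℓ : ℕ) : ℝ) ≤ Real.log ((N : ℝ) + 1) := by
    apply Real.log_le_log
    · exact_mod_cast hA0
    · exact_mod_cast hA
  have hout := outer_le (β := β) hβ h0 ℓ ((k.1 + 1) * ℓ) n
  have b1 := sum_box_le (fun a c => hMaj β θ ℓ ((k.1 + 1) * ℓ) a c)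
    (fun a c => hMaj_nonneg hβ _ _ _ _ _) n
  have b2 := sum_box_le (fun a c => hMaj β θ ℓ ((k.1 + 1) * ℓ) c a)
    (fun a c => hMaj_nonneg hβ _ _ _ _ _) n
  rw [Finset.sum_comm] at b2
  have b3 : 2 * β * ((ℓ : ℝ) ^ (-θ) * (1 + Real.log (((k.1 + 1) * ℓ : ℕ) : ℝ)) + zS θ)
      ≤ 2 * β * ((ℓ : ℝ) ^ (-θ) * (1 + Real.log ((N : ℝ) + 1)) + zS θ) := by
    gcongr
  have b4 : ∑ p ∈ boxF n, cpl β (2 + θ) p * (rhoC (ePair ℓ m p) k) ^ θ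
      ≤ ∑ p ∈ boxF n, hMaj β θ ℓ ((k.1 + 1) * ℓ) p.1.natAbs p.2.natAbs
        + ∑ p ∈ boxF n, hMaj β θ ℓ ((k.1 + 1) * ℓ) p.2.natAbs p.1.natAbs := by
    rw [← Finset.sum_add_distrib]
    exact Finset.sum_le_sum fun p _ => term_le hβ h0 h1 hℓ k p
  linarith

/-- **Lower bound for the `q`-SOS long-range chain at the critical exponent
`α = 2 + q/2`.** For every `β ∈ (0,∞)` and every `q ∈ (0,2)`, there exists `c_β > 0`
such that for every `N ≥ 2`,
`c_β N/(ln N)^{2/q} ≤ Var^{q-SOS}_{N,β,2+q/2}[φ(0)]`. -/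
theorem qSOS_chain_lower_bound_alpha_critical
    (β : ℝ) (hβ : 0 < β) (q : ℝ) (hq₀ : 0 < q) (hq₂ : q < 2) :
    ∃ c : ℝ, 0 < c ∧
      ∀ N : ℕ, 2 ≤ N →
        c * (N : ℝ) / (Real.log N) ^ ((2 : ℝ) / q) ≤ chainVar N β (2 + q / 2) q := by
  have h0 : 0 < q / 2 := by linarith
  have h1 : q / 2 < 1 := by linarith
  have hlog2 : 0 < Real.log 2 := Real.log_pos (by norm_num)
  have hr : 0 < 2 / q := by positivity
  set C1 : ℝ := 5 + 1 / (q / 2) with hC1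
  set C : ℝ := 16 * β * (C1 + zS (q / 2)) with hC
  set C2 : ℝ := 1 + 1 / (Real.log 2) ^ (2 / q) with hC2
  have hC2p : 0 < C2 := by positivity
  refine ⟨1 / 3 * Real.exp (-C) / C2, by positivity, ?_⟩
  intro N hN
  have hN' : (2 : ℝ) ≤ N := by exact_mod_cast hN
  set Lg := Real.log N with hLg
  have hLg2 : Real.log 2 ≤ Lg := Real.log_le_log (by norm_num) hN'
  have hLgp : 0 < Lg := by linarith
  set T : ℝ := Lg ^ (2 / q) with hT
  have hTp : 0 < T := by positivity
  set ℓ : ℕ := min ⌈T⌉₊ (N + 1) with hℓd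
  have hℓ : 0 < ℓ := lt_min (Nat.ceil_pos.2 hTp) (by omega)
  have hℓN : ℓ ≤ N + 1 := min_le_right _ _
  have hℓr : (0 : ℝ) < ℓ := by exact_mod_cast hℓ
  have hℓT : (ℓ : ℝ) ≤ C2 * T := by
    have a1 : (ℓ : ℝ) ≤ (⌈T⌉₊ : ℝ) := by exact_mod_cast min_le_left _ _
    have a2 := Nat.ceil_lt_add_one hTp.le
    have a3 : (Real.log 2) ^ (2 / q) ≤ T := Real.rpow_le_rpow hlog2.le hLg2 hr.le
    have a4 : 1 ≤ 1 / (Real.log 2) ^ (2 / q) * T := by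
      rw [div_mul_eq_mul_div, one_mul, le_div_iff₀ (by positivity), one_mul]; exact a3
    rw [hC2, add_mul, one_mul]
    linarith
  set m : ℕ := (N + 1) / ℓ with hmd
  have hm : m * ℓ ≤ N + 1 := Nat.div_mul_le_self _ _
  have hm2 : ((N : ℝ) + 1) / (2 * ℓ) ≤ m := by
    have b1 : 1 ≤ m := (Nat.one_le_div_iff hℓ).2 hℓN
    have b2 : N + 1 < m * ℓ + ℓ := Nat.lt_div_mul_add hℓ
    have b3 : N + 1 ≤ m * (2 * ℓ) := by nlinarith
    rw [div_le_iff₀ (by positivity)]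
    exact_mod_cast b3
  have hlogN1 : Real.log ((N : ℝ) + 1) ≤ 2 * Lg := by
    have : 2 * Lg = Real.log ((N : ℝ) ^ 2) := by rw [Real.log_pow]; push_cast; rfl
    rw [this]
    apply Real.log_le_log (by positivity)
    nlinarith
  have hkey : (ℓ : ℝ) ^ (-(q / 2)) * (1 + Real.log ((N : ℝ) + 1)) ≤ C1 := by
    rw [Real.rpow_neg hℓr.le, inv_mul_le_iff₀ (by positivity)]
    rcases le_total ⌈T⌉₊ (N + 1) with h | h
    · have e : ℓ = ⌈T⌉₊ := min_eq_left h
      have a1 : T ≤ ℓ := by rw [e]; exact Nat.le_ceil T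
      have a2 : Lg ≤ (ℓ : ℝ) ^ (q / 2) := by
        have := Real.rpow_le_rpow hTp.le a1 h0.le
        rw [hT, ← Real.rpow_mul hLgp.le, show 2 / q * (q / 2) = 1 by field_simp, Real.rpow_one] at this
        exact this
      have a3 : 0.6931471803 < Real.log 2 := Real.log_two_gt_d9
      have a4 : 1 + Real.log ((N : ℝ) + 1) ≤ 4 * Lg := by linarith
      have a5 : 0 ≤ 1 / (q / 2) := by positivity
      nlinarith
    · have e : ℓ = N + 1 := min_eq_right h
      have e' : (ℓ : ℝ) = (N : ℝ) + 1 := by rw [e]; push_cast; rfl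
      rw [e']
      have a1 := Real.log_le_rpow_div (by positivity : 0 ≤ (N : ℝ) + 1) h0
      have a2 : 1 ≤ ((N : ℝ) + 1) ^ (q / 2) := Real.one_le_rpow (by linarith) h0.le
      rw [hC1]
      have : ((N : ℝ) + 1) ^ (q / 2) * (5 + 1 / (q / 2))
        = 5 * ((N : ℝ) + 1) ^ (q / 2) + ((N : ℝ) + 1) ^ (q / 2) / (q / 2) := by ring
      rw [this]
      linarith
  have hbound := var_of_bound (α := 2 + q / 2) (q := q) (C := C) hβ (by linarith) hq₀ hq₂ N ℓ m hm hℓ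
    (fun k n => (bound_C hβ.le h0 h1 hℓ hm k n).trans (by
      rw [hC]; gcongr))
  refine le_trans ?_ hbound
  have c1 : (N : ℝ) / (2 * (C2 * T)) ≤ m := by
    refine le_trans ?_ hm2
    gcongr
    linarith
  calc 1 / 3 * Real.exp (-C) / C2 * N / T = 2 / 3 * ((N : ℝ) / (2 * (C2 * T)) * Real.exp (-C)) := by
        field_simp
    _ ≤ _ := by gcongr
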